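/- Under assumptions (A) and (B), the mixture of product measures ν_N approximates the Gibbs measure μ_N in relative entropy in both directions: H(μ_N|ν_N) → 0 and H(ν_N|μ_N) → 0 as N → ∞. -/

import Mathlib

open Filter Real MeasureTheory

/-- Relative entropy (Kullback–Leibler divergence) between two probability mass
functions on a finite set (finite whenever `ρ ≪ π`, which holds in our setting). -/
noncomputable def relEnt {α : Type*} [Fintype α] (rho pion : α → ℝ) : ℝ :=
  ∑ x, rho x * Real.log (rho x / pion x)

/-!
For weights `f`, `g` on a finite set, the normalizing constants cancel from the sum of the relative
entropies of their normalizations in the two directions, so that both entropies are controlled by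
the averages of `|log (f / g)|` alone. By the method of types, a product measure with parameter `θ`
gives a configuration with empirical distribution `m` the mass
`exp (-N * shannonEntropy m) * exp (-N * relEnt m θ)`, while the Gibbs weight is
`exp (-N * shannonEntropy m) * exp (-N * V m)`, where `V` is the gap of the free energy below its
maximum. On the scale `√N` around a maximizer the second factors converge to
`exp (-yᵀ C⁻¹ y / 2)`, with `C` the covariance matrix of the categorical distribution, and to
`exp (-yᵀ H y / 2)`; averaging the former over a Gaussian of covariance `S` yields a multiple of
`exp (-yᵀ (C + S)⁻¹ y / 2)`, so that the choice `C + S = H⁻¹` makes `log (f / g)` small there.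
Elsewhere `|log (f / g)|` is at most linear in `1 + N * V`, whose square has bounded averages.
-/

namespace GibbsMixture

open Asymptotics InformationTheory Matrix Topology Finset

section RelativeEntropy

variable {α : Type*} [Fintype α]

theorem mul_klFun_div {x y : ℝ} (hy : 0 < y) :
    y * klFun (x / y) = x * log (x / y) + y - x := by
  rw [klFun_apply]
  field_simp

theorem relEnt_eq_sum_klFun {ρ θ : α → ℝ} (hθ : ∀ x, 0 < θ x) (hsum : ∑ x, ρ x = ∑ x, θ x) :
    relEnt ρ θ = ∑ x, θ x * klFun (ρ x / θ x) := by
  simp only [relEnt, mul_klFun_div (hθ _), Finset.sum_sub_distrib, Finset.sum_add_distrib, hsum,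
    add_sub_cancel_right]

theorem mul_klFun_div_le_relEnt {ρ θ : α → ℝ} (hρ : ∀ x, 0 ≤ ρ x) (hθ : ∀ x, 0 < θ x)
    (hsum : ∑ x, ρ x = ∑ x, θ x) (x : α) : θ x * klFun (ρ x / θ x) ≤ relEnt ρ θ := by
  rw [relEnt_eq_sum_klFun hθ hsum]
  exact single_le_sum (f := fun x ↦ θ x * klFun (ρ x / θ x))
    (fun y _ ↦ mul_nonneg (hθ y).le (klFun_nonneg (div_nonneg (hρ y) (hθ y).le))) (mem_univ x)

theorem relEnt_nonneg {ρ θ : α → ℝ} (hρ : ∀ x, 0 ≤ ρ x) (hθ : ∀ x, 0 < θ x)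
    (hsum : ∑ x, ρ x = ∑ x, θ x) : 0 ≤ relEnt ρ θ := by
  rw [relEnt_eq_sum_klFun hθ hsum]
  exact sum_nonneg fun x _ ↦
    mul_nonneg (hθ x).le (klFun_nonneg (div_nonneg (hρ x) (hθ x).le))

theorem klFun_le_sub_one_sq {x : ℝ} (hx : 0 ≤ x) : klFun x ≤ (x - 1) ^ 2 := by
  rcases hx.eq_or_lt with rfl | hx
  · simp [klFun_zero]
  · have := mul_le_mul_of_nonneg_left (log_le_sub_one_of_pos hx) hx.le
    rw [klFun_apply]
    linarith

theorem sqrt_sub_one_sq_le_klFun {x : ℝ} (hx : 0 ≤ x) : (√x - 1) ^ 2 ≤ klFun x := by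
  have hdiff : klFun x - (√x - 1) ^ 2 = 2 * √x * klFun √x := by
    rw [klFun_apply, klFun_apply, log_sqrt hx]
    linear_combination (1 - log x) * sq_sqrt hx
  linarith [mul_nonneg (mul_nonneg zero_le_two (sqrt_nonneg x)) (klFun_nonneg (sqrt_nonneg x))]

theorem sq_sub_le_relEnt {ρ θ : α → ℝ} (hρ : ρ ∈ stdSimplex ℝ α) (hθ : θ ∈ stdSimplex ℝ α)
    (hθ0 : ∀ x, 0 < θ x) (x : α) : (ρ x - θ x) ^ 2 / 4 ≤ relEnt ρ θ := by
  have hρ1 := (mem_Icc_of_mem_stdSimplex hρ x).2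
  have hθ1 := (mem_Icc_of_mem_stdSimplex hθ x).2
  have hx := mul_klFun_div_le_relEnt hρ.1 hθ0 (hρ.2.trans hθ.2.symm) x
  have hsqrt : θ x * (√(ρ x / θ x) - 1) ^ 2 = (√(ρ x) - √(θ x)) ^ 2 := by
    have hpos := sqrt_pos.2 (hθ0 x)
    rw [sqrt_div' _ (hθ0 x).le]
    nth_rw 1 [← sq_sqrt (hθ0 x).le]
    field_simp
  have hle : (√(ρ x) - √(θ x)) ^ 2 ≤ relEnt ρ θ := by
    rw [← hsqrt]
    exact (mul_le_mul_of_nonneg_left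
      (sqrt_sub_one_sq_le_klFun (div_nonneg (hρ.1 x) (hθ0 x).le)) (hθ0 x).le).trans hx
  have hfactor : (ρ x - θ x) ^ 2 = (√(ρ x) - √(θ x)) ^ 2 * (√(ρ x) + √(θ x)) ^ 2 := by
    rw [← mul_pow, mul_comm, ← sq_sub_sq, sq_sqrt (hρ.1 x), sq_sqrt (hθ0 x).le]
  have hadd : (√(ρ x) + √(θ x)) ^ 2 ≤ 2 ^ 2 :=
    pow_le_pow_left₀ (by positivity)
      (by linarith [sqrt_le_one.2 hρ1, sqrt_le_one.2 hθ1]) 2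
  nlinarith [mul_le_mul_of_nonneg_left hadd (sq_nonneg (√(ρ x) - √(θ x)))]

theorem relEnt_le_sum_sq_div {ρ θ : α → ℝ} {b : ℝ} (hρ : ∀ x, 0 ≤ ρ x) (hb : 0 < b)
    (hθ : ∀ x, b ≤ θ x) (hsum : ∑ x, ρ x = ∑ x, θ x) :
    relEnt ρ θ ≤ (∑ x, (ρ x - θ x) ^ 2) / b := by
  have hθ0 x : 0 < θ x := hb.trans_le (hθ x)
  rw [relEnt_eq_sum_klFun hθ0 hsum, sum_div]
  refine sum_le_sum fun x _ ↦ ?_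
  calc θ x * klFun (ρ x / θ x) ≤ θ x * (ρ x / θ x - 1) ^ 2 := by
        gcongr
        · exact (hθ0 x).le
        · exact klFun_le_sub_one_sq (div_nonneg (hρ x) (hθ0 x).le)
    _ = (ρ x - θ x) ^ 2 / θ x := by
        have := hθ0 x
        field_simp
    _ ≤ (ρ x - θ x) ^ 2 / b := by
        gcongr
        exact hθ x

theorem isLittleO_klFun_sub_half_sq :
    (fun x ↦ klFun x - (x - 1) ^ 2 / 2) =o[𝓝 1] fun x ↦ (x - 1) ^ 2 := by
  have hlog : (fun x ↦ log x - (x - 1)) =o[𝓝 1] fun x ↦ (x - 1) ^ 1 := by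
    simpa using (hasDerivAt_log one_ne_zero).isLittleO
  have hmem : Set.Ioi (0 : ℝ) ∈ 𝓝 1 := Ioi_mem_nhds one_pos
  rw [← nhdsWithin_eq_nhds.2 hmem] at hlog ⊢
  have hderiv x (hx : x ∈ Set.Ioi (0 : ℝ)) :
      HasDerivWithinAt (fun x ↦ klFun x - (x - 1) ^ 2 / 2) (log x - (x - 1)) (Set.Ioi 0) x := by
    have := (hasDerivAt_klFun (ne_of_gt hx)).sub
      ((((hasDerivAt_id x).sub_const 1).pow 2).div_const 2)
    exact (this.congr_deriv (by simp)).hasDerivWithinAt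
  simpa [klFun_one] using (convex_Ioi 0).isLittleO_pow_succ_real (Set.mem_Ioi.2 one_pos) hderiv hlog

/-- The probability mass function proportional to the weight `f`. -/
noncomputable def normalize (f : α → ℝ) (x : α) : ℝ := f x / ∑ y, f y

variable [Nonempty α] {f g : α → ℝ}

theorem normalize_pos (hf : ∀ x, 0 < f x) (x : α) : 0 < normalize f x :=
  div_pos (hf x) (sum_pos (fun x _ ↦ hf x) univ_nonempty)

theorem sum_normalize (hf : ∀ x, 0 < f x) : ∑ x, normalize f x = 1 := by
  simp_rw [normalize, ← sum_div]
  exact div_self (sum_pos (fun x _ ↦ hf x) univ_nonempty).ne'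

theorem relEnt_normalize (hf : ∀ x, 0 < f x) (hg : ∀ x, 0 < g x) :
    relEnt (normalize f) (normalize g) =
      ∑ x, normalize f x * log (f x / g x) - log ((∑ x, f x) / ∑ x, g x) := by
  have hsf := sum_pos (fun x _ ↦ hf x) univ_nonempty
  have hsg := sum_pos (fun x _ ↦ hg x) univ_nonempty
  have hlog x : log (normalize f x / normalize g x) =
      log (f x / g x) - log ((∑ x, f x) / ∑ x, g x) := by
    rw [normalize, normalize, div_div_div_comm,
      log_div (div_pos (hf x) (hg x)).ne' (div_pos hsf hsg).ne']
  simp only [relEnt, hlog, mul_sub, sum_sub_distrib, ← sum_mul, sum_normalize hf, one_mul]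

theorem sum_normalize_mul_abs_le {h W : α → ℝ} {B C R ε : ℝ} (hf : ∀ x, 0 < f x) (hR : 0 < R)
    (hC : 0 ≤ C) (hε : 0 ≤ ε) (hbound : ∀ x, |h x| ≤ C * W x)
    (hsmall : ∀ x, W x ≤ R → |h x| ≤ ε) (hmoment : ∑ x, f x * W x ^ 2 ≤ B * ∑ x, f x) :
    ∑ x, normalize f x * |h x| ≤ ε + C / R * B := by
  have hpoint x : |h x| ≤ ε + C / R * W x ^ 2 := by
    rcases le_or_gt (W x) R with hW | hW
    · exact (hsmall x hW).trans (le_add_of_nonneg_right (by positivity))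
    · calc |h x| ≤ C * W x * 1 := by simpa using hbound x
        _ ≤ C * W x * (W x / R) := by
            have hWx := hR.trans hW
            gcongr
            exact (one_le_div hR).2 hW.le
        _ = C / R * W x ^ 2 := by ring
        _ ≤ _ := le_add_of_nonneg_left hε
  have hmoment' : ∑ x, normalize f x * W x ^ 2 ≤ B := by
    simp_rw [normalize, div_mul_eq_mul_div, ← sum_div]
    exact (div_le_iff₀ (sum_pos (fun x _ ↦ hf x) univ_nonempty)).2 hmoment
  calc ∑ x, normalize f x * |h x| ≤ ∑ x, normalize f x * (ε + C / R * W x ^ 2) :=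
        sum_le_sum fun x _ ↦ mul_le_mul_of_nonneg_left (hpoint x) (normalize_pos hf x).le
    _ = ε + C / R * ∑ x, normalize f x * W x ^ 2 := by
        simp only [mul_add, sum_add_distrib, ← sum_mul, sum_normalize hf, one_mul, mul_sum,
          mul_left_comm]
    _ ≤ ε + C / R * B := by gcongr

theorem relEnt_normalize_add_relEnt_normalize_le (hf : ∀ x, 0 < f x) (hg : ∀ x, 0 < g x) :
    relEnt (normalize f) (normalize g) + relEnt (normalize g) (normalize f) ≤
      ∑ x, normalize f x * |log (f x / g x)| + ∑ x, normalize g x * |log (f x / g x)| := by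
  have hf' : ∑ x, normalize f x * log (f x / g x) ≤ ∑ x, normalize f x * |log (f x / g x)| :=
    sum_le_sum fun x _ ↦ mul_le_mul_of_nonneg_left (le_abs_self _) (normalize_pos hf x).le
  have hg' : ∑ x, normalize g x * log (g x / f x) ≤ ∑ x, normalize g x * |log (f x / g x)| :=
    sum_le_sum fun x _ ↦ mul_le_mul_of_nonneg_left
      (by rw [← inv_div, log_inv]; exact neg_le_abs _) (normalize_pos hg x).le
  have hconst : log ((∑ x, g x) / ∑ x, f x) = -log ((∑ x, f x) / ∑ x, g x) := by
    rw [← log_inv, inv_div]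
  rw [relEnt_normalize hf hg, relEnt_normalize hg hf, hconst]
  linarith

end RelativeEntropy

theorem tendsto_relEnt_normalize {ι : Type*} {l : Filter ι} {α : ι → Type*}
    [∀ i, Fintype (α i)] [∀ i, Nonempty (α i)] {f g W : ∀ i, α i → ℝ} {B C : ℝ}
    (hf : ∀ᶠ i in l, ∀ x, 0 < f i x) (hg : ∀ᶠ i in l, ∀ x, 0 < g i x) (hC : 0 ≤ C)
    (hbound : ∀ᶠ i in l, ∀ x, |log (f i x / g i x)| ≤ C * W i x)
    (hsmall : ∀ R, ∀ ε > 0, ∀ᶠ i in l, ∀ x, W i x ≤ R → |log (f i x / g i x)| ≤ ε)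
    (hfW : ∀ᶠ i in l, ∑ x, f i x * W i x ^ 2 ≤ B * ∑ x, f i x)
    (hgW : ∀ᶠ i in l, ∑ x, g i x * W i x ^ 2 ≤ B * ∑ x, g i x) :
    Tendsto (fun i ↦ relEnt (normalize (f i)) (normalize (g i))) l (𝓝 0) ∧
      Tendsto (fun i ↦ relEnt (normalize (g i)) (normalize (f i))) l (𝓝 0) := by
  have hnonneg : ∀ᶠ i in l, 0 ≤ relEnt (normalize (f i)) (normalize (g i)) ∧
      0 ≤ relEnt (normalize (g i)) (normalize (f i)) := by
    filter_upwards [hf, hg] with i hfi hgi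
    have hsum := (sum_normalize hfi).trans (sum_normalize hgi).symm
    exact ⟨relEnt_nonneg (fun x ↦ (normalize_pos hfi x).le) (normalize_pos hgi) hsum,
      relEnt_nonneg (fun x ↦ (normalize_pos hgi x).le) (normalize_pos hfi) hsum.symm⟩
  have hlim : Tendsto (fun i ↦ relEnt (normalize (f i)) (normalize (g i)) +
      relEnt (normalize (g i)) (normalize (f i))) l (𝓝 0) := by
    refine tendsto_order.2 ⟨fun b hb ↦ hnonneg.mono fun i hi ↦ hb.trans_le (add_nonneg hi.1 hi.2),
      fun ε hε ↦ ?_⟩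
    set R := 8 * C * (|B| + 1) / ε + 1 with hRdef
    have hR : 0 < R := by positivity
    have htail : C / R * B ≤ ε / 8 := by
      have hCR : 8 * C * (|B| + 1) ≤ ε * R := by
        rw [hRdef]; field_simp; linarith
      calc C / R * B ≤ C / R * (|B| + 1) := by gcongr; linarith [le_abs_self B]
        _ ≤ ε / 8 := by rw [div_mul_eq_mul_div, div_le_iff₀ hR]; linarith
    filter_upwards [hf, hg, hbound, hsmall R (ε / 8) (by positivity), hfW, hgW]
      with i hfi hgi hbi hsi hfWi hgWi
    have hε' : 0 ≤ ε / 8 := by positivity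
    linarith [relEnt_normalize_add_relEnt_normalize_le hfi hgi,
      sum_normalize_mul_abs_le hfi hR hC hε' hbi hsi hfWi,
      sum_normalize_mul_abs_le hgi hR hC hε' hbi hsi hgWi]
  exact ⟨squeeze_zero' (hnonneg.mono fun i hi ↦ hi.1)
      (hnonneg.mono fun i hi ↦ le_add_of_nonneg_right hi.2) hlim,
    squeeze_zero' (hnonneg.mono fun i hi ↦ hi.2)
      (hnonneg.mono fun i hi ↦ le_add_of_nonneg_left hi.1) hlim⟩

section Gaussian

variable {n : Type*} [Fintype n]

theorem continuous_dotProduct_mulVec (B : Matrix n n ℝ) : Continuous fun x ↦ x ⬝ᵥ B *ᵥ x := by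
  unfold dotProduct mulVec dotProduct
  fun_prop

theorem dotProduct_mulVec_comm_of_isHermitian {B : Matrix n n ℝ} (hB : B.IsHermitian)
    (x y : n → ℝ) : x ⬝ᵥ B *ᵥ y = y ⬝ᵥ B *ᵥ x := by
  have hBt : Bᵀ = B := by rw [← conjTranspose_eq_transpose_of_trivial, hB.eq]
  rw [dotProduct_mulVec, ← mulVec_transpose, hBt, dotProduct_comm]

theorem sum_sq_le_card_mul_norm_sq (x : n → ℝ) :
    ∑ k, x k ^ 2 ≤ Fintype.card n * ‖x‖ ^ 2 := by
  calc ∑ k, x k ^ 2 ≤ ∑ _k : n, ‖x‖ ^ 2 :=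
        sum_le_sum fun k _ ↦ sq_le_sq' (neg_le_of_abs_le (norm_le_pi_norm x k))
          (le_of_abs_le (norm_le_pi_norm x k))
    _ = Fintype.card n * ‖x‖ ^ 2 := by simp

theorem norm_sq_le_sum_sq (x : n → ℝ) : ‖x‖ ^ 2 ≤ ∑ k, x k ^ 2 := by
  have hnonneg : 0 ≤ ∑ k, x k ^ 2 := sum_nonneg fun k _ ↦ sq_nonneg (x k)
  rw [← le_sqrt (norm_nonneg x) hnonneg, pi_norm_le_iff_of_nonneg (sqrt_nonneg _)]
  exact fun k ↦ abs_le_sqrt (single_le_sum (f := fun k ↦ x k ^ 2) (fun i _ ↦ sq_nonneg (x i))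
    (mem_univ k))

open scoped MatrixOrder in
theorem exists_dotProduct_mulVec_eq_sum_sq [DecidableEq n] {B : Matrix n n ℝ} (hB : B.PosDef) :
    ∃ T : Matrix n n ℝ, T.det ^ 2 = B.det ∧ ∀ x, x ⬝ᵥ B *ᵥ x = ∑ k, (T *ᵥ x) k ^ 2 := by
  obtain ⟨T, hT⟩ := CStarAlgebra.nonneg_iff_eq_star_mul_self.1 hB.posSemidef.nonneg
  rw [star_eq_conjTranspose, conjTranspose_eq_transpose_of_trivial] at hT
  refine ⟨T, by rw [hT, det_mul, det_transpose, sq], fun x ↦ ?_⟩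
  rw [hT, ← mulVec_mulVec, dotProduct_mulVec, vecMul_transpose]
  simp only [dotProduct, sq]

theorem exists_mul_norm_sq_le_dotProduct_mulVec {B : Matrix n n ℝ} (hB : B.PosDef) :
    ∃ c > 0, ∀ x, c * ‖x‖ ^ 2 ≤ x ⬝ᵥ B *ᵥ x := by
  classical
  obtain ⟨T, hdet, hT⟩ := exists_dotProduct_mulVec_eq_sum_sq hB
  have hT0 : IsUnit T.det := by
    rw [← isUnit_pow_iff two_ne_zero, hdet]
    exact hB.det_pos.ne'.isUnit
  let L : (n → ℝ) →L[ℝ] (n → ℝ) := (toLin' T⁻¹).toContinuousLinearMap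
  refine ⟨((‖L‖ + 1) ^ 2)⁻¹, by positivity, fun x ↦ ?_⟩
  have hx : ‖x‖ ≤ (‖L‖ + 1) * ‖T *ᵥ x‖ := by
    have hLx : L (T *ᵥ x) = x := by
      simp [L, mulVec_mulVec, nonsing_inv_mul _ hT0]
    calc ‖x‖ = ‖L (T *ᵥ x)‖ := by rw [hLx]
      _ ≤ ‖L‖ * ‖T *ᵥ x‖ := L.le_opNorm _
      _ ≤ (‖L‖ + 1) * ‖T *ᵥ x‖ := by gcongr; linarith
  rw [inv_mul_le_iff₀ (by positivity), hT]
  calc ‖x‖ ^ 2 ≤ ((‖L‖ + 1) * ‖T *ᵥ x‖) ^ 2 := by gcongr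
    _ = (‖L‖ + 1) ^ 2 * ‖T *ᵥ x‖ ^ 2 := mul_pow _ _ _
    _ ≤ (‖L‖ + 1) ^ 2 * ∑ k, (T *ᵥ x) k ^ 2 := by gcongr; exact norm_sq_le_sum_sq _

theorem integrable_exp_neg_mul_norm_sq {c : ℝ} (hc : 0 < c) :
    Integrable fun x : n → ℝ ↦ exp (-c * ‖x‖ ^ 2) := by
  have hb : 0 < c / (Fintype.card n + 1) := by positivity
  have hprod := Integrable.fintype_prod (μ := fun _ : n ↦ (volume : Measure ℝ))
    (fun _ ↦ integrable_exp_neg_mul_sq hb)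
  refine hprod.mono' (by fun_prop) (ae_of_all _ fun x ↦ ?_)
  rw [norm_eq_abs, abs_exp, ← exp_sum, ← mul_sum, exp_le_exp, neg_mul, neg_mul, neg_le_neg_iff,
    div_mul_eq_mul_div, div_le_iff₀ (by positivity), mul_assoc]
  gcongr
  linarith [sum_sq_le_card_mul_norm_sq x, sq_nonneg ‖x‖]

theorem integral_exp_neg_half_dotProduct_mulVec [DecidableEq n] {B : Matrix n n ℝ} (hB : B.PosDef) :
    ∫ x, exp (-(1 / 2) * (x ⬝ᵥ B *ᵥ x)) = √((2 * π) ^ Fintype.card n / B.det) := by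
  obtain ⟨T, hdet, hT⟩ := exists_dotProduct_mulVec_eq_sum_sq hB
  have hT0 : T.det ≠ 0 := fun h ↦ hB.det_pos.ne' (by rw [← hdet, h, zero_pow two_ne_zero])
  have hstd : ∫ x : n → ℝ, exp (-(1 / 2) * ∑ k, x k ^ 2) = √((2 * π) ^ Fintype.card n) := by
    simp only [mul_sum, exp_sum]
    rw [integral_fintype_prod_volume_eq_pow fun t : ℝ ↦ exp (-(1 / 2) * t ^ 2), integral_gaussian,
      div_div_eq_mul_div, div_one, mul_comm, eq_comm, sqrt_eq_iff_mul_self_eq (by positivity)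
      (by positivity), ← mul_pow, mul_self_sqrt (by positivity)]
  have hsubst : ∫ x, exp (-(1 / 2) * ∑ k, (toLin' T x) k ^ 2) =
      ∫ x, exp (-(1 / 2) * ∑ k, x k ^ 2) ∂(Measure.map (toLin' T) volume) := by
    rw [integral_map (LinearMap.continuous_on_pi _).measurable.aemeasurable]
    exact Continuous.aestronglyMeasurable (by fun_prop)
  simp only [toLin'_apply] at hsubst
  simp only [hT]
  rw [hsubst, map_matrix_volume_pi_eq_smul_volume_pi hT0, integral_smul_measure, hstd,
    ENNReal.toReal_ofReal (abs_nonneg _), sqrt_div (by positivity), ← hdet, sqrt_sq_eq_abs,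
    abs_inv, smul_eq_mul, div_eq_inv_mul]

theorem integrable_exp_neg_half_dotProduct_mulVec {B : Matrix n n ℝ} (hB : B.PosDef) :
    Integrable fun x ↦ exp (-(1 / 2) * (x ⬝ᵥ B *ᵥ x)) := by
  classical
  refine not_imp_comm.1 integral_undef ?_
  rw [integral_exp_neg_half_dotProduct_mulVec hB]
  have := hB.det_pos
  positivity

variable [DecidableEq n]

/-- The density of the centred Gaussian distribution with covariance matrix `S`. -/
noncomputable def gaussianDensity (S : Matrix n n ℝ) (x : n → ℝ) : ℝ :=
  exp (-(1 / 2) * (x ⬝ᵥ S⁻¹ *ᵥ x)) / √((2 * π) ^ Fintype.card n * S.det)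

/-- The centred Gaussian distribution with (invertible) covariance matrix `S`. -/
noncomputable def gaussianMeasure (S : Matrix n n ℝ) : Measure (n → ℝ) :=
  volume.withDensity fun x ↦ ENNReal.ofReal (gaussianDensity S x)

variable {C S : Matrix n n ℝ}

theorem gaussianDensity_nonneg (S : Matrix n n ℝ) (x : n → ℝ) : 0 ≤ gaussianDensity S x := by
  unfold gaussianDensity
  positivity

theorem continuous_gaussianDensity (S : Matrix n n ℝ) : Continuous (gaussianDensity S) := by
  have := continuous_dotProduct_mulVec S⁻¹
  unfold gaussianDensity
  fun_prop

theorem integral_gaussianMeasure (S : Matrix n n ℝ) (f : (n → ℝ) → ℝ) :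
    ∫ x, f x ∂gaussianMeasure S = ∫ x, f x * gaussianDensity S x := by
  rw [gaussianMeasure, integral_withDensity_eq_integral_toReal_smul
    (continuous_gaussianDensity S).measurable.ennreal_ofReal (by simp)]
  simp only [ENNReal.toReal_ofReal (gaussianDensity_nonneg S _), smul_eq_mul, mul_comm]

theorem integrable_gaussianMeasure_iff {f : (n → ℝ) → ℝ} :
    Integrable f (gaussianMeasure S) ↔ Integrable fun x ↦ f x * gaussianDensity S x := by
  rw [gaussianMeasure, integrable_withDensity_iff
    (continuous_gaussianDensity S).measurable.ennreal_ofReal (by simp)]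
  simp only [ENNReal.toReal_ofReal (gaussianDensity_nonneg S _)]

theorem isProbabilityMeasure_gaussianMeasure (hS : S.PosDef) :
    IsProbabilityMeasure (gaussianMeasure S) := by
  have hint : Integrable (gaussianDensity S) :=
    (integrable_exp_neg_half_dotProduct_mulVec hS.inv).div_const _
  have hdet := hS.det_pos
  refine ⟨?_⟩
  rw [gaussianMeasure, withDensity_apply _ MeasurableSet.univ, Measure.restrict_univ,
    ← ofReal_integral_eq_lintegral_ofReal hint (ae_of_all _ (gaussianDensity_nonneg S)),
    ENNReal.ofReal_eq_one]
  simp only [gaussianDensity]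
  rw [integral_div, integral_exp_neg_half_dotProduct_mulVec hS.inv, det_nonsing_inv,
    Ring.inverse_eq_inv', div_inv_eq_mul, div_self (by positivity)]

theorem integrable_norm_pow_four_gaussianMeasure (hS : S.PosDef) :
    Integrable (fun x ↦ ‖x‖ ^ 4) (gaussianMeasure S) := by
  rw [integrable_gaussianMeasure_iff]
  obtain ⟨c, hc, hcoercive⟩ := exists_mul_norm_sq_le_dotProduct_mulVec hS.inv
  have hint := ((integrable_exp_neg_mul_norm_sq (n := n) (c := c / 4) (by positivity)).const_mul
    (32 / c ^ 2)).div_const √((2 * π) ^ Fintype.card n * S.det)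
  have hmeas : AEStronglyMeasurable (fun x ↦ ‖x‖ ^ 4 * gaussianDensity S x) volume :=
    ((continuous_norm.pow 4).mul (continuous_gaussianDensity S)).aestronglyMeasurable
  refine hint.mono' hmeas (ae_of_all _ fun x ↦ ?_)
  have hpoly : ‖x‖ ^ 4 ≤ 32 / c ^ 2 * exp (c * ‖x‖ ^ 2 / 4) := by
    have := quadratic_le_exp_of_nonneg (x := c * ‖x‖ ^ 2 / 4) (by positivity)
    rw [div_mul_eq_mul_div, le_div_iff₀ (by positivity)]
    nlinarith [mul_nonneg hc.le (sq_nonneg ‖x‖)]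
  rw [norm_of_nonneg (mul_nonneg (by positivity) (gaussianDensity_nonneg S x)), gaussianDensity,
    ← mul_div_assoc]
  gcongr ?_ / _
  calc ‖x‖ ^ 4 * exp (-(1 / 2) * (x ⬝ᵥ S⁻¹ *ᵥ x))
      ≤ 32 / c ^ 2 * exp (c * ‖x‖ ^ 2 / 4) * exp (-(1 / 2) * (c * ‖x‖ ^ 2)) := by
        gcongr ?_ * exp ?_
        linarith [hcoercive x]
    _ = 32 / c ^ 2 * exp (-(c / 4) * ‖x‖ ^ 2) := by
        rw [mul_assoc, ← exp_add]
        ring_nf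

theorem dotProduct_mulVec_add_eq_complete_square (hC : C.PosDef) (hS : S.PosDef)
    (x y : n → ℝ) :
    (y - x) ⬝ᵥ C⁻¹ *ᵥ (y - x) + x ⬝ᵥ S⁻¹ *ᵥ x =
      (x - (C⁻¹ + S⁻¹)⁻¹ *ᵥ C⁻¹ *ᵥ y) ⬝ᵥ (C⁻¹ + S⁻¹) *ᵥ (x - (C⁻¹ + S⁻¹)⁻¹ *ᵥ C⁻¹ *ᵥ y) +
        y ⬝ᵥ (C + S)⁻¹ *ᵥ y := by
  have hP : (C⁻¹ + S⁻¹).PosDef := hC.inv.add hS.inv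
  set P := C⁻¹ + S⁻¹ with hPdef
  set z := P⁻¹ *ᵥ C⁻¹ *ᵥ y with hz
  have hPz : P *ᵥ z = C⁻¹ *ᵥ y := by
    rw [hz, mulVec_mulVec, mul_nonsing_inv _ hP.det_pos.ne'.isUnit, one_mulVec]
  have hwoodbury : (C + S)⁻¹ = C⁻¹ - C⁻¹ * P⁻¹ * C⁻¹ := by
    have := add_mul_mul_inv_eq_sub C 1 S 1 hC.isUnit hS.isUnit (by
      simpa [add_comm] using hP.isUnit)
    simpa [hPdef, add_comm] using this
  have hzz : z ⬝ᵥ C⁻¹ *ᵥ y = y ⬝ᵥ C⁻¹ *ᵥ y - y ⬝ᵥ (C + S)⁻¹ *ᵥ y := by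
    rw [dotProduct_mulVec_comm_of_isHermitian hC.inv.1, hz, hwoodbury, sub_mulVec, dotProduct_sub,
      sub_sub_cancel, mulVec_mulVec, mulVec_mulVec, mul_assoc]
  have hleft : (y - x) ⬝ᵥ C⁻¹ *ᵥ (y - x) =
      y ⬝ᵥ C⁻¹ *ᵥ y - 2 * (x ⬝ᵥ C⁻¹ *ᵥ y) + x ⬝ᵥ C⁻¹ *ᵥ x := by
    simp only [mulVec_sub, dotProduct_sub, sub_dotProduct]
    rw [dotProduct_mulVec_comm_of_isHermitian hC.inv.1 y x]
    ring
  have hright : (x - z) ⬝ᵥ P *ᵥ (x - z) =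
      x ⬝ᵥ P *ᵥ x - 2 * (x ⬝ᵥ C⁻¹ *ᵥ y) + z ⬝ᵥ C⁻¹ *ᵥ y := by
    simp only [mulVec_sub, dotProduct_sub, sub_dotProduct]
    rw [dotProduct_mulVec_comm_of_isHermitian hP.1 z x, hPz]
    ring
  rw [hleft, hright, hzz, hPdef, add_mulVec, dotProduct_add]
  ring

theorem det_inv_add_inv_mul (hC : C.PosDef) (hS : S.PosDef) :
    (C⁻¹ + S⁻¹).det * (C.det * S.det) = (C + S).det := by
  have hfactor : C * (C⁻¹ + S⁻¹) * S = C + S := by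
    rw [mul_add, add_mul, mul_nonsing_inv _ hC.det_pos.ne'.isUnit, one_mul, mul_assoc,
      nonsing_inv_mul _ hS.det_pos.ne'.isUnit, mul_one, add_comm]
  rw [← hfactor, det_mul, det_mul]
  ring

theorem integral_exp_neg_half_sub_gaussianMeasure (hC : C.PosDef) (hS : S.PosDef) (y : n → ℝ) :
    ∫ x, exp (-(1 / 2) * ((y - x) ⬝ᵥ C⁻¹ *ᵥ (y - x))) ∂gaussianMeasure S =
      √(C.det / (C + S).det) * exp (-(1 / 2) * (y ⬝ᵥ (C + S)⁻¹ *ᵥ y)) := by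
  have hP : (C⁻¹ + S⁻¹).PosDef := hC.inv.add hS.inv
  have hintegrand x : exp (-(1 / 2) * ((y - x) ⬝ᵥ C⁻¹ *ᵥ (y - x))) * gaussianDensity S x =
      exp (-(1 / 2) * ((x - (C⁻¹ + S⁻¹)⁻¹ *ᵥ C⁻¹ *ᵥ y) ⬝ᵥ
        (C⁻¹ + S⁻¹) *ᵥ (x - (C⁻¹ + S⁻¹)⁻¹ *ᵥ C⁻¹ *ᵥ y))) *
        (exp (-(1 / 2) * (y ⬝ᵥ (C + S)⁻¹ *ᵥ y)) / √((2 * π) ^ Fintype.card n * S.det)) := by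
    rw [gaussianDensity, ← mul_div_assoc, ← mul_div_assoc, ← exp_add, ← exp_add, ← mul_add,
      ← mul_add, dotProduct_mulVec_add_eq_complete_square hC hS]
  have hconst : √((2 * π) ^ Fintype.card n / (C⁻¹ + S⁻¹).det) /
      √((2 * π) ^ Fintype.card n * S.det) = √(C.det / (C + S).det) := by
    have hCdet := hC.det_pos
    have hSdet := hS.det_pos
    have hPdet := hP.det_pos
    rw [← sqrt_div (by positivity), ← det_inv_add_inv_mul hC hS]
    congr 1
    field_simp
  rw [integral_gaussianMeasure]
  simp only [hintegrand]
  rw [integral_mul_const,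
    integral_sub_right_eq_self (fun x ↦ exp (-(1 / 2) * (x ⬝ᵥ (C⁻¹ + S⁻¹) *ᵥ x))),
    integral_exp_neg_half_dotProduct_mulVec hP, ← hconst]
  ring

end Gaussian

section SimplexCoordinates

variable {d : ℕ}

/-- The vector of all `d + 1` coordinates, with sum one, whose first `d` coordinates are `x`. -/
noncomputable def full (x : Fin d → ℝ) : Fin (d + 1) → ℝ := Fin.snoc x (1 - ∑ k, x k)

/-- The direction of displacement of `full x` caused by a displacement `v` of `x`: the vector
with coordinate sum zero whose first `d` coordinates are `v`. -/
noncomputable def tangent (v : Fin d → ℝ) : Fin (d + 1) → ℝ := Fin.snoc v (-∑ k, v k)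

/-- The simplex of probability vectors on `d + 1` points, described by the first `d`
coordinates. -/
def redSimplex (d : ℕ) : Set (Fin d → ℝ) := {x | (∀ k, 0 ≤ x k) ∧ ∑ k, x k ≤ 1}

@[simp] theorem full_castSucc (x : Fin d → ℝ) (k : Fin d) : full x k.castSucc = x k := by
  simp [full]

@[simp] theorem full_last (x : Fin d → ℝ) : full x (Fin.last d) = 1 - ∑ k, x k := by
  simp [full]

@[simp] theorem tangent_castSucc (v : Fin d → ℝ) (k : Fin d) : tangent v k.castSucc = v k := by
  simp [tangent]

@[simp] theorem tangent_last (v : Fin d → ℝ) : tangent v (Fin.last d) = -∑ k, v k := by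
  simp [tangent]

theorem sum_full (x : Fin d → ℝ) : ∑ k, full x k = 1 := by
  simp [Fin.sum_univ_castSucc]

theorem full_add (a x : Fin d → ℝ) : full (a + x) = full a + tangent x := by
  ext k
  refine Fin.lastCases ?_ (fun i ↦ ?_) k
  · simp only [full_last, Pi.add_apply, tangent_last, Finset.sum_add_distrib]
    ring
  · simp

theorem full_sub_full (x y : Fin d → ℝ) : full x - full y = tangent (x - y) := by
  rw [← add_sub_cancel y x, full_add, add_sub_cancel_left, add_sub_cancel_left]

theorem tangent_smul (t : ℝ) (v : Fin d → ℝ) : tangent (t • v) = t • tangent v := by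
  ext k
  refine Fin.lastCases ?_ (fun i ↦ ?_) k <;> simp [mul_sum]

theorem tangent_sub (v w : Fin d → ℝ) : tangent (v - w) = tangent v - tangent w := by
  rw [← full_sub_full, ← sub_sub_sub_cancel_right _ _ (full 0), full_sub_full, full_sub_full,
    sub_zero, sub_zero]

theorem full_init {m : Fin (d + 1) → ℝ} (hm : ∑ k, m k = 1) : full (Fin.init m) = m := by
  ext k
  rw [Fin.sum_univ_castSucc] at hm
  refine Fin.lastCases ?_ (fun i ↦ ?_) k
  · simp only [full_last, Fin.init]
    linarith
  · simp [Fin.init]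

theorem contDiff_full {n : WithTop ℕ∞} :
    ContDiff ℝ n (full : (Fin d → ℝ) → Fin (d + 1) → ℝ) := by
  refine contDiff_pi.2 fun k ↦ Fin.lastCases ?_ (fun i ↦ ?_) k
  · simp only [full_last]
    fun_prop
  · simp only [full_castSucc]
    fun_prop

theorem continuous_full : Continuous (full : (Fin d → ℝ) → Fin (d + 1) → ℝ) :=
  (contDiff_full (n := 0)).continuous

theorem continuous_tangent : Continuous (tangent : (Fin d → ℝ) → Fin (d + 1) → ℝ) := by
  have htangent : (tangent : (Fin d → ℝ) → Fin (d + 1) → ℝ) = fun v ↦ full v - full 0 := by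
    ext1 v
    rw [full_sub_full, sub_zero]
  rw [htangent]
  exact continuous_full.sub continuous_const

theorem norm_tangent_le (v : Fin d → ℝ) : ‖tangent v‖ ≤ (d + 1) * ‖v‖ := by
  refine (pi_norm_le_iff_of_nonneg (by positivity)).2 fun k ↦ Fin.lastCases ?_ (fun i ↦ ?_) k
  · calc ‖tangent v (Fin.last d)‖ ≤ ∑ k, ‖v k‖ := by
          simpa using abs_sum_le_sum_abs v univ
      _ ≤ ∑ _k : Fin d, ‖v‖ := sum_le_sum fun k _ ↦ norm_le_pi_norm v k
      _ ≤ (d + 1) * ‖v‖ := by simp; nlinarith [norm_nonneg v]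
  · rw [tangent_castSucc]
    nlinarith [norm_le_pi_norm v i, norm_nonneg v, (d.cast_nonneg : (0 : ℝ) ≤ d)]

theorem full_mem_stdSimplex_iff {x : Fin d → ℝ} :
    full x ∈ stdSimplex ℝ (Fin (d + 1)) ↔ x ∈ redSimplex d := by
  simp [stdSimplex, redSimplex, sum_full, Fin.forall_fin_succ']

theorem isCompact_redSimplex (d : ℕ) : IsCompact (redSimplex d) := by
  have himage : redSimplex d = Fin.init '' stdSimplex ℝ (Fin (d + 1)) := by
    ext x
    refine ⟨fun hx ↦ ⟨full x, full_mem_stdSimplex_iff.2 hx, ?_⟩, ?_⟩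
    · simp [full]
    · rintro ⟨m, hm, rfl⟩
      rwa [← full_mem_stdSimplex_iff, full_init hm.2]
  rw [himage]
  exact (isCompact_stdSimplex ℝ _).image (by unfold Fin.init; fun_prop)

theorem full_pos_of_mem_interior {x : Fin d → ℝ} (hx : x ∈ interior (redSimplex d))
    (k : Fin (d + 1)) : 0 < full x k := by
  have hpos {v : Fin d → ℝ} (hv : tangent v k < 0) : 0 < full x k := by
    have hcont : Tendsto (fun t : ℝ ↦ x + t • v) (𝓝[>] 0) (𝓝 x) :=
      (Continuous.tendsto' (by fun_prop) 0 x (by simp)).mono_left nhdsWithin_le_nhds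
    obtain ⟨t, htmem, ht0⟩ :=
      ((hcont.eventually (mem_interior_iff_mem_nhds.1 hx)).and self_mem_nhdsWithin).exists
    have hnonneg := (full_mem_stdSimplex_iff.2 htmem).1 k
    rw [full_add, tangent_smul, Pi.add_apply, Pi.smul_apply, smul_eq_mul] at hnonneg
    nlinarith [mul_pos_of_neg_of_neg (neg_lt_zero.2 ht0) hv]
  revert hpos
  refine Fin.lastCases (fun hpos ↦ ?_) (fun i hpos ↦ hpos (v := fun _ ↦ -1) (by simp)) k
  rcases d.eq_zero_or_pos with rfl | hd
  · rw [full_last]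
    simp
  · exact hpos (v := fun _ ↦ 1) (by simpa using hd)

end SimplexCoordinates

section CategoricalCovariance

variable {n : Type*} [Fintype n] [DecidableEq n]

/-- The covariance matrix of the indicators of the outcomes in `n`, when outcome `k` has
probability `a k` and the remaining mass `1 - ∑ k, a k` belongs to one further outcome. -/
def categoricalCov (a : n → ℝ) : Matrix n n ℝ := diagonal a - vecMulVec a a

variable {a : n → ℝ}

theorem inv_categoricalCov (ha : ∀ k, 0 < a k) (hr : 0 < 1 - ∑ k, a k) :
    (categoricalCov a)⁻¹ = diagonal (fun k ↦ (a k)⁻¹) + (1 - ∑ k, a k)⁻¹ • vecMulVec 1 1 := by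
  refine inv_eq_right_inv ?_
  have hdiag : diagonal a * diagonal (fun k ↦ (a k)⁻¹) = 1 := by
    simp [diagonal_mul_diagonal, mul_inv_cancel₀ (ha _).ne']
  have hone : a ⬝ᵥ (1 : n → ℝ) = ∑ k, a k := by simp [dotProduct]
  have hrow : vecMulVec a a * diagonal (fun k ↦ (a k)⁻¹) = vecMulVec a 1 := by
    ext i j
    simp [vecMulVec_apply, mul_diagonal, mul_assoc, mul_inv_cancel₀ (ha j).ne']
  have hcol : diagonal a * vecMulVec 1 1 = vecMulVec a 1 := by
    ext i j
    simp [vecMulVec_apply, diagonal_mul]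
  have hdot : vecMulVec a a * vecMulVec 1 1 = (∑ k, a k) • vecMulVec a (1 : n → ℝ) := by
    rw [vecMulVec_mul_vecMulVec, hone]
    ext i j
    simp [vecMulVec_apply, mul_comm]
  rw [categoricalCov, sub_mul, mul_add, mul_add, hdiag, hrow, Matrix.mul_smul, Matrix.mul_smul,
    hcol, hdot, add_sub_add_comm, ← smul_sub]
  nth_rw 1 [← one_smul ℝ (vecMulVec a (1 : n → ℝ))]
  have hsub : vecMulVec a 1 - (∑ k, a k) • vecMulVec a 1 =
      (1 - ∑ k, a k) • vecMulVec a (1 : n → ℝ) := by rw [sub_smul, one_smul]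
  rw [hsub, inv_smul_smul₀ hr.ne', one_smul, sub_add_cancel]

theorem dotProduct_inv_categoricalCov_mulVec (ha : ∀ k, 0 < a k) (hr : 0 < 1 - ∑ k, a k)
    (z : n → ℝ) : z ⬝ᵥ (categoricalCov a)⁻¹ *ᵥ z =
      ∑ k, z k ^ 2 / a k + (∑ k, z k) ^ 2 / (1 - ∑ k, a k) := by
  have hdiag : z ⬝ᵥ diagonal (fun k ↦ (a k)⁻¹) *ᵥ z = ∑ k, z k ^ 2 / a k := by
    simp only [dotProduct, mulVec_diagonal]
    exact sum_congr rfl fun k _ ↦ by ring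
  rw [inv_categoricalCov ha hr, add_mulVec, dotProduct_add, hdiag, smul_mulVec, dotProduct_smul,
    vecMulVec_mulVec]
  simp [dotProduct, ← sum_mul]
  ring

theorem det_categoricalCov (a : n → ℝ) :
    (categoricalCov a).det = (1 - ∑ k, a k) * ∏ k, a k := by
  have hfactor : categoricalCov a = diagonal a * (1 + vecMulVec 1 (-a)) := by
    ext i j
    by_cases hij : i = j <;>
      simp [hij, categoricalCov, mul_add, diagonal_mul, vecMulVec_apply, sub_eq_add_neg]
  rw [hfactor, det_mul, det_diagonal, vecMulVec_eq Unit,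
    det_one_add_replicateCol_mul_replicateRow, mul_comm]
  simp [dotProduct, sub_eq_add_neg]

theorem posDef_categoricalCov (ha : ∀ k, 0 < a k) (hr : 0 < 1 - ∑ k, a k) :
    (categoricalCov a).PosDef := by
  have hinv : ((categoricalCov a)⁻¹).PosDef := by
    refine .of_dotProduct_mulVec_pos ?_ fun z hz ↦ ?_
    · rw [inv_categoricalCov ha hr, IsHermitian.ext_iff]
      intro i j
      by_cases hij : i = j <;> simp [hij, Ne.symm]
    · obtain ⟨k, hk⟩ := Function.ne_iff.1 hz
      rw [star_trivial, dotProduct_inv_categoricalCov_mulVec ha hr]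
      have hsum : 0 < ∑ k, z k ^ 2 / a k :=
        sum_pos' (fun i _ ↦ div_nonneg (sq_nonneg _) (ha i).le)
          ⟨k, mem_univ k, div_pos (sq_pos_of_ne_zero hk) (ha k)⟩
      positivity
  have hunit : IsUnit (categoricalCov a).det := by
    rw [det_categoricalCov]
    exact (mul_pos hr (prod_pos fun k _ ↦ ha k)).ne'.isUnit
  rw [← nonsing_inv_nonsing_inv _ hunit]
  exact hinv.inv

end CategoricalCovariance

section CategoricalCovarianceSimplex

variable {d : ℕ} {a : Fin d → ℝ}

theorem posDef_categoricalCov_of_full_pos (ha : ∀ k, 0 < full a k) : (categoricalCov a).PosDef :=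
  posDef_categoricalCov (fun k ↦ by simpa using ha k.castSucc) (by simpa using ha (Fin.last d))

theorem det_categoricalCov_eq_prod_full (a : Fin d → ℝ) :
    (categoricalCov a).det = ∏ k, full a k := by
  rw [det_categoricalCov, Fin.prod_univ_castSucc]
  simp [mul_comm]

theorem sum_tangent_sq_div_full (ha : ∀ k, 0 < full a k) (z : Fin d → ℝ) :
    ∑ k, tangent z k ^ 2 / full a k = z ⬝ᵥ (categoricalCov a)⁻¹ *ᵥ z := by
  rw [dotProduct_inv_categoricalCov_mulVec (fun k ↦ by simpa using ha k.castSucc)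
    (by simpa using ha (Fin.last d)), Fin.sum_univ_castSucc]
  simp

end CategoricalCovarianceSimplex

section SecondOrderExpansion

variable {E : Type*} [NormedAddCommGroup E] [NormedSpace ℝ E] {g : E → ℝ} {a : E}

theorem isLittleO_sub_half_fderiv_fderiv_of_fderiv_eq_zero (hg : ContDiffAt ℝ 2 g a)
    (hcrit : fderiv ℝ g a = 0) :
    (fun x ↦ g x - g a - fderiv ℝ (fderiv ℝ g) a (x - a) (x - a) / 2)
      =o[𝓝 a] fun x ↦ ‖x - a‖ ^ 2 := by
  set B := fderiv ℝ (fderiv ℝ g) a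
  have hsymm (u v : E) : B u v = B v u := hg.isSymmSndFDerivAt (by simp) u v
  obtain ⟨r, hr, hdiff⟩ := Metric.eventually_nhds_iff_ball.1
    ((hg.eventually (by simp)).mono fun x hx ↦ hx.differentiableAt two_ne_zero)
  have hball : Metric.ball a r ∈ 𝓝 a := Metric.ball_mem_nhds a hr
  have hderiv x (hx : x ∈ Metric.ball a r) :
      HasFDerivWithinAt (fun x ↦ g x - B (x - a) (x - a) / 2) (fderiv ℝ g x - B (x - a))
        (Metric.ball a r) x := by
    have hsub : HasFDerivAt (fun x : E ↦ x - a) (ContinuousLinearMap.id ℝ E) x :=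
      (hasFDerivAt_id x).sub_const a
    have hquad := ((B.hasFDerivAt.comp x hsub).clm_apply hsub).mul_const (2⁻¹ : ℝ)
    refine ((hdiff x hx).hasFDerivAt.sub (hquad.congr_fderiv ?_)).hasFDerivWithinAt
    ext v
    simp [hsymm v]
    ring
  have hlin : (fun x ↦ fderiv ℝ g x - B (x - a)) =o[𝓝 a] fun x ↦ ‖x - a‖ ^ 1 := by
    have hfderiv : HasFDerivAt (fderiv ℝ g) B a :=
      ((hg.fderiv_right (m := 1) (by norm_num)).differentiableAt one_ne_zero).hasFDerivAt
    simpa [hcrit, isLittleO_norm_right] using hfderiv.isLittleO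
  rw [← nhdsWithin_eq_nhds.2 hball] at hlin ⊢
  simpa [sub_right_comm] using (convex_ball a r).isLittleO_pow_succ (Metric.mem_ball_self hr)
    hderiv hlin

variable {n : Type*} [Fintype n] [DecidableEq n]

theorem apply_apply_eq_dotProduct_mulVec (B : (n → ℝ) →L[ℝ] (n → ℝ) →L[ℝ] ℝ) (x y : n → ℝ) :
    B x y = x ⬝ᵥ (of fun k l ↦ B (Pi.single k 1) (Pi.single l 1)) *ᵥ y := by
  conv_lhs => rw [pi_eq_sum_univ' x, pi_eq_sum_univ' y]
  simp only [map_sum, map_smul, _root_.sum_apply, _root_.smul_apply, smul_eq_mul, dotProduct,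
    mulVec, of_apply, mul_sum]
  rw [Finset.sum_comm]
  exact sum_congr rfl fun k _ ↦ sum_congr rfl fun l _ ↦ by ring

theorem isLittleO_sub_half_hessian_of_isLocalMax {G : (n → ℝ) → ℝ} {a : n → ℝ}
    {H : Matrix n n ℝ} (hG : ContDiffAt ℝ 2 G a) (hmax : IsLocalMax G a)
    (hH : ∀ k l, H k l =
      -(fderiv ℝ (fun x ↦ fderiv ℝ G x (Pi.single l 1)) a) (Pi.single k 1)) :
    (fun x ↦ G a - G x - 1 / 2 * ((x - a) ⬝ᵥ H *ᵥ (x - a))) =o[𝓝 a] fun x ↦ ‖x - a‖ ^ 2 := by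
  have hdiff : DifferentiableAt ℝ (fderiv ℝ G) a :=
    (hG.fderiv_right (m := 1) (by norm_num)).differentiableAt one_ne_zero
  have hmatrix : (of fun k l ↦ fderiv ℝ (fderiv ℝ G) a (Pi.single k 1) (Pi.single l 1)) = -H := by
    ext k l
    rw [Matrix.neg_apply, hH, neg_neg,
      (hdiff.hasFDerivAt.clm_apply (hasFDerivAt_const (Pi.single l (1 : ℝ)) a)).fderiv]
    simp
  have hexpansion := isLittleO_sub_half_fderiv_fderiv_of_fderiv_eq_zero hG hmax.fderiv_eq_zero
  refine hexpansion.neg_left.congr_left fun x ↦ ?_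
  rw [apply_apply_eq_dotProduct_mulVec, hmatrix, neg_mulVec, dotProduct_neg]
  ring

end SecondOrderExpansion

section Compactness

variable {E : Type*} [NormedAddCommGroup E] {S : Set E} {V : E → ℝ}

theorem isBigO_principal_of_isCompact {f g : E → ℝ} (hS : IsCompact S)
    (h : ∀ x ∈ S, f =O[𝓝[S] x] g) : f =O[𝓟 S] g := by
  refine hS.induction_on (p := fun T ↦ f =O[𝓟 T] g) (by simp) (fun _ _ hst ht ↦ ht.mono (by simpa))
    (fun s t hs ht ↦ ?_) fun x hx ↦ ?_
  · rw [← sup_principal]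
    exact hs.sup ht
  · obtain ⟨c, hc⟩ := (h x hx).bound
    exact ⟨_, hc, .of_bound c (mem_principal_self _)⟩

theorem isBigO_nhdsWithin_of_continuousOn {f g : E → ℝ} {x : E} (hf : ContinuousOn f S)
    (hg : ContinuousOn g S) (hx : x ∈ S) (hgx : g x ≠ 0) : f =O[𝓝[S] x] g := by
  refine ((hf x hx).isBigO_one ℝ).trans ((isBigO_const_left_iff_pos_le_norm one_ne_zero).2 ?_)
  exact ⟨‖g x‖ / 2, by positivity, ((hg x hx).norm.eventually_const_le
    (half_lt_self (norm_pos_iff.2 hgx)))⟩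

theorem exists_le_mul_norm_sub_sq (hS : IsCompact S) (hV : ContinuousOn V S) {a : E}
    (ha : V =O[𝓝 a] fun x ↦ ‖x - a‖ ^ 2) : ∃ C, 0 ≤ C ∧ ∀ x ∈ S, V x ≤ C * ‖x - a‖ ^ 2 := by
  have hbigO : V =O[𝓟 S] fun x ↦ ‖x - a‖ ^ 2 := by
    refine isBigO_principal_of_isCompact hS fun x hx ↦ ?_
    rcases eq_or_ne x a with rfl | hxa
    · exact ha.mono nhdsWithin_le_nhds
    · exact isBigO_nhdsWithin_of_continuousOn hV (by fun_prop) hx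
        (pow_ne_zero 2 (norm_ne_zero_iff.2 (sub_ne_zero.2 hxa)))
  obtain ⟨C, hC, hbound⟩ := hbigO.exists_nonneg
  refine ⟨C, hC, fun x hx ↦ (le_abs_self _).trans ?_⟩
  simpa using isBigOWith_principal.1 hbound x hx

theorem exists_mul_norm_sub_sq_le {ι : Type*} [Finite ι] [Nonempty ι] (hS : IsCompact S)
    (hV : ContinuousOn V S) {M : ι → E} (hpos : ∀ x ∈ S, x ∉ Set.range M → 0 < V x)
    (hV0 : ∀ x ∈ S, 0 ≤ V x)
    (hM : ∀ j, (fun x ↦ ‖x - M j‖ ^ 2) =O[𝓝 (M j)] V) :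
    ∃ c > 0, ∀ x ∈ S, ∃ j, c * ‖x - M j‖ ^ 2 ≤ V x := by
  have hbigO : (fun x ↦ Metric.infDist x (Set.range M) ^ 2) =O[𝓟 S] V := by
    refine isBigO_principal_of_isCompact hS fun x hx ↦ ?_
    by_cases hxM : x ∈ Set.range M
    · obtain ⟨j, rfl⟩ := hxM
      refine (IsBigO.of_bound' (.of_forall fun x ↦ ?_)).trans ((hM j).mono nhdsWithin_le_nhds)
      rw [norm_pow, norm_pow, norm_norm, norm_of_nonneg Metric.infDist_nonneg,
        ← dist_eq_norm x]
      exact pow_le_pow_left₀ Metric.infDist_nonneg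
        (Metric.infDist_le_dist_of_mem (Set.mem_range_self j)) 2
    · refine isBigO_nhdsWithin_of_continuousOn ?_ hV hx (hpos x hx hxM).ne'
      exact ((Metric.continuous_infDist_pt (Set.range M)).pow 2).continuousOn
  obtain ⟨C, hC, hbound⟩ := hbigO.exists_pos
  refine ⟨C⁻¹, inv_pos.2 hC, fun x hx ↦ ?_⟩
  obtain ⟨_, ⟨j, rfl⟩, hj⟩ := (Set.finite_range M).isCompact.exists_infDist_eq_dist
    (Set.range_nonempty M) x
  have := isBigOWith_principal.1 hbound x hx
  rw [hj, norm_pow, dist_eq_norm, norm_norm, norm_of_nonneg (hV0 x hx)] at this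
  exact ⟨j, (inv_mul_le_iff₀ hC).2 this⟩

end Compactness

section Scaling

variable {ι : Type*} {l : Filter ι} {t : ι → ℝ}

theorem tendsto_mul_klFun (ht : Tendsto t l atTop) {x : ι → ℝ} {u : ℝ}
    (hx : Tendsto (fun i ↦ √(t i) * (x i - 1)) l (𝓝 u)) :
    Tendsto (fun i ↦ t i * klFun (x i)) l (𝓝 (u ^ 2 / 2)) := by
  have hsqrt : Tendsto (fun i ↦ √(t i)) l atTop := tendsto_sqrt_atTop.comp ht
  have hsq : Tendsto (fun i ↦ t i * (x i - 1) ^ 2) l (𝓝 (u ^ 2)) := by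
    refine (hx.pow 2).congr' ?_
    filter_upwards [ht.eventually_ge_atTop 0] with i hi
    rw [mul_pow, sq_sqrt hi]
  have hx1 : Tendsto x l (𝓝 1) := by
    rw [← tendsto_sub_nhds_zero_iff]
    have := hsqrt.inv_tendsto_atTop.mul hx
    rw [zero_mul] at this
    refine this.congr' ?_
    filter_upwards [hsqrt.eventually_gt_atTop 0] with i hi
    exact inv_mul_cancel_left₀ hi.ne' _
  have hrem : Tendsto (fun i ↦ t i * (klFun (x i) - (x i - 1) ^ 2 / 2)) l (𝓝 0) :=
    (isLittleO_one_iff ℝ).1 <| ((isBigO_refl t l).mul_isLittleO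
      (isLittleO_klFun_sub_half_sq.comp_tendsto hx1)).trans_isBigO (hsq.isBigO_one ℝ)
  have := hrem.add (hsq.div_const 2)
  rw [zero_add] at this
  exact this.congr fun i ↦ by ring

theorem tendsto_of_tendsto_sqrt_smul_sub {E : Type*} [NormedAddCommGroup E] [NormedSpace ℝ E]
    {x : ι → E} {p v : E} (ht : Tendsto t l atTop)
    (hv : Tendsto (fun i ↦ √(t i) • (x i - p)) l (𝓝 v)) : Tendsto x l (𝓝 p) := by
  have hlim := ((tendsto_sqrt_atTop.comp ht).inv_tendsto_atTop.smul hv).add_const p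
  rw [zero_smul, zero_add] at hlim
  refine hlim.congr' ?_
  filter_upwards [ht.eventually_gt_atTop 0] with i hi
  simp [smul_smul, inv_mul_cancel₀ (sqrt_pos.2 hi).ne']

theorem tendsto_mul_relEnt {κ : Type*} [Fintype κ] (ht : Tendsto t l atTop) {m θ : ι → κ → ℝ}
    {p v : κ → ℝ} (hp : ∀ k, 0 < p k) (hθ : Tendsto θ l (𝓝 p))
    (hv : Tendsto (fun i ↦ √(t i) • (m i - θ i)) l (𝓝 v))
    (hsum : ∀ᶠ i in l, ∑ k, m i k = ∑ k, θ i k) :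
    Tendsto (fun i ↦ t i * relEnt (m i) (θ i)) l (𝓝 (1 / 2 * ∑ k, v k ^ 2 / p k)) := by
  have hθpos : ∀ᶠ i in l, ∀ k, 0 < θ i k :=
    eventually_all.2 fun k ↦ (tendsto_pi_nhds.1 hθ k).eventually_const_lt (hp k)
  have hterm k : Tendsto (fun i ↦ θ i k * (t i * klFun (m i k / θ i k))) l
      (𝓝 (p k * ((v k / p k) ^ 2 / 2))) := by
    refine (tendsto_pi_nhds.1 hθ k).mul (tendsto_mul_klFun ht ?_)
    refine ((tendsto_pi_nhds.1 hv k).div (tendsto_pi_nhds.1 hθ k) (hp k).ne').congr' ?_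
    filter_upwards [hθpos] with i hi
    have := (hi k).ne'
    simp only [Pi.div_apply, Pi.smul_apply, Pi.sub_apply, smul_eq_mul]
    field_simp
  have hlimit : ∑ k, p k * ((v k / p k) ^ 2 / 2) = 1 / 2 * ∑ k, v k ^ 2 / p k := by
    rw [mul_sum]
    exact sum_congr rfl fun k _ ↦ by field_simp [(hp k).ne']
  rw [← hlimit]
  refine (tendsto_finsetSum univ fun k _ ↦ hterm k).congr' ?_
  filter_upwards [hθpos, hsum] with i hi hi'
  rw [relEnt_eq_sum_klFun hi hi', mul_sum]
  exact sum_congr rfl fun k _ ↦ by ring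

theorem tendsto_mul_of_isLittleO_sub_half_quadratic {n : Type*} [Fintype n] {V : (n → ℝ) → ℝ}
    {a y : n → ℝ} {H : Matrix n n ℝ} {z : ι → n → ℝ}
    (hV : (fun x ↦ V x - 1 / 2 * ((x - a) ⬝ᵥ H *ᵥ (x - a))) =o[𝓝 a] fun x ↦ ‖x - a‖ ^ 2)
    (ht : Tendsto t l atTop) (hz : Tendsto z l (𝓝 y)) :
    Tendsto (fun i ↦ t i * V (a + (√(t i))⁻¹ • z i)) l (𝓝 (1 / 2 * (y ⬝ᵥ H *ᵥ y))) := by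
  have hsqrt : Tendsto (fun i ↦ √(t i)) l atTop := tendsto_sqrt_atTop.comp ht
  have hpoint : Tendsto (fun i ↦ a + (√(t i))⁻¹ • z i) l (𝓝 a) := by
    simpa using tendsto_const_nhds.add (hsqrt.inv_tendsto_atTop.smul hz)
  have hcancel : ∀ᶠ i in l, 0 < t i := ht.eventually_gt_atTop 0
  have hsq : Tendsto (fun i ↦ t i * ‖(√(t i))⁻¹ • z i‖ ^ 2) l (𝓝 (‖y‖ ^ 2)) := by
    refine (hz.norm.pow 2).congr' ?_
    filter_upwards [hcancel] with i hi
    rw [norm_smul, mul_pow, norm_inv, inv_pow, norm_of_nonneg (sqrt_nonneg _), sq_sqrt hi.le,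
      mul_inv_cancel_left₀ hi.ne']
  have hrem : Tendsto (fun i ↦ t i * (V (a + (√(t i))⁻¹ • z i) -
      1 / 2 * (((√(t i))⁻¹ • z i) ⬝ᵥ H *ᵥ ((√(t i))⁻¹ • z i)))) l (𝓝 0) := by
    have := (isBigO_refl t l).mul_isLittleO (hV.comp_tendsto hpoint)
    simp only [Function.comp_def, add_sub_cancel_left] at this
    exact (isLittleO_one_iff ℝ).1 (this.trans_isBigO (hsq.isBigO_one ℝ))
  have hquad : Tendsto (fun i ↦ 1 / 2 * (z i ⬝ᵥ H *ᵥ z i)) l (𝓝 (1 / 2 * (y ⬝ᵥ H *ᵥ y))) :=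
    (((continuous_dotProduct_mulVec H).tendsto y).comp hz).const_mul _
  have hadd := hrem.add hquad
  rw [zero_add] at hadd
  refine hadd.congr' ?_
  filter_upwards [hcancel] with i hi
  have hinv : t i * ((√(t i))⁻¹ * (√(t i))⁻¹) = 1 := by
    rw [← mul_inv, mul_self_sqrt hi.le, mul_inv_cancel₀ hi.ne']
  simp only [mulVec_smul, dotProduct_smul, smul_dotProduct, smul_eq_mul]
  linear_combination -(1 / 2 * (z i ⬝ᵥ H *ᵥ z i)) * hinv

end Scaling

section ProductMeasures

theorem pow_four_le_mul_exp_add_exp_neg (z : ℝ) : z ^ 4 ≤ 24 * (exp z + exp (-z)) := by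
  wlog hz : 0 ≤ z generalizing z
  · have := this (-z) (by linarith)
    rwa [neg_neg, add_comm, Even.neg_pow (by decide)] at this
  have hexp := pow_div_factorial_le_exp z hz 4
  rw [show ((4 : ℕ).factorial : ℝ) = 24 by norm_num [Nat.factorial],
    div_le_iff₀ (by norm_num)] at hexp
  linarith [exp_pos (-z)]

variable {κ : Type*} [Fintype κ] {N : ℕ}

theorem norm_pow_four_le_sum_pow_four (v : κ → ℝ) : ‖v‖ ^ 4 ≤ ∑ k, v k ^ 4 := by
  have hpow k : 0 ≤ v k ^ 4 := Even.pow_nonneg (by decide) _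
  rcases isEmpty_or_nonempty κ with hκ | hκ
  · simp [Subsingleton.elim v 0]
  obtain ⟨k, hk⟩ := Finite.exists_max fun k ↦ ‖v k‖
  calc ‖v‖ ^ 4 ≤ ‖v k‖ ^ 4 := by
        gcongr
        exact (pi_norm_le_iff_of_nonneg (norm_nonneg _)).2 hk
    _ = v k ^ 4 := by rw [norm_eq_abs, Even.pow_abs (by decide)]
    _ ≤ ∑ k, v k ^ 4 := single_le_sum (f := fun k ↦ v k ^ 4) (fun k _ ↦ hpow k) (mem_univ k)

theorem sum_prod_eq_one {θ : κ → ℝ} (hθ : ∑ k, θ k = 1) :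
    ∑ σ : Fin N → κ, ∏ i, θ (σ i) = 1 := by
  rw [← Fintype.sum_pow, hθ, one_pow]

theorem sum_mul_exp_le_exp_sq {θ φ : κ → ℝ} {s : ℝ} (hθ : θ ∈ stdSimplex ℝ κ)
    (hcentred : ∑ k, θ k * φ k = 0) (hφ : ∀ k, |φ k| ≤ s) (hs : s ≤ 1) :
    ∑ k, θ k * exp (φ k) ≤ exp (s ^ 2) := by
  calc ∑ k, θ k * exp (φ k) ≤ ∑ k, θ k * (φ k + (s ^ 2 + 1)) := by
        refine sum_le_sum fun k _ ↦ mul_le_mul_of_nonneg_left ?_ (hθ.1 k)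
        have hexp := (abs_le.1 (abs_exp_sub_one_sub_id_le ((hφ k).trans hs))).2
        linarith [sq_le_sq' (neg_le_of_abs_le (hφ k)) (le_of_abs_le (hφ k))]
    _ = s ^ 2 + 1 := by simp only [mul_add, sum_add_distrib, hcentred, ← sum_mul, hθ.2]; ring
    _ ≤ exp (s ^ 2) := add_one_le_exp _

theorem sum_prod_mul_exp_le {θ φ : κ → ℝ} {s : ℝ} (hθ : θ ∈ stdSimplex ℝ κ)
    (hcentred : ∑ k, θ k * φ k = 0) (hφ : ∀ k, |φ k| ≤ s) (hs : s ≤ 1) :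
    ∑ σ : Fin N → κ, (∏ i, θ (σ i)) * exp (∑ i, φ (σ i)) ≤ exp (N * s ^ 2) := by
  calc ∑ σ : Fin N → κ, (∏ i, θ (σ i)) * exp (∑ i, φ (σ i))
      = (∑ k, θ k * exp (φ k)) ^ N := by
        rw [Fintype.sum_pow]
        exact sum_congr rfl fun σ _ ↦ by rw [exp_sum, prod_mul_distrib]
    _ ≤ exp (s ^ 2) ^ N := by
        gcongr
        · exact sum_nonneg fun k _ ↦ mul_nonneg (hθ.1 k) (exp_pos _).le
        · exact sum_mul_exp_le_exp_sq hθ hcentred hφ hs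
    _ = exp (N * s ^ 2) := (exp_nat_mul _ _).symm

/-- The Shannon entropy of a probability vector. -/
noncomputable def shannonEntropy (m : κ → ℝ) : ℝ := ∑ k, negMulLog (m k)

variable [DecidableEq κ]

/-- The empirical distribution of a configuration, called its magnetization in spin models. -/
noncomputable def empiricalDistribution (σ : Fin N → κ) (k : κ) : ℝ :=
  ((univ.filter fun i ↦ σ i = k).card : ℝ) / N

theorem sum_apply_eq_mul_sum_empiricalDistribution (σ : Fin N → κ) (φ : κ → ℝ) :
    ∑ i, φ (σ i) = N * ∑ k, empiricalDistribution σ k * φ k := by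
  rcases eq_or_ne N 0 with rfl | hN
  · simp
  rw [← sum_fiberwise univ σ, mul_sum]
  refine sum_congr rfl fun k _ ↦ ?_
  rw [sum_congr rfl fun i hi ↦ by rw [(mem_filter.1 hi).2], sum_const, nsmul_eq_mul,
    empiricalDistribution]
  field_simp

theorem empiricalDistribution_mem_stdSimplex (hN : N ≠ 0) (σ : Fin N → κ) :
    empiricalDistribution σ ∈ stdSimplex ℝ κ := by
  refine ⟨fun k ↦ by unfold empiricalDistribution; positivity, ?_⟩
  have hcount := sum_apply_eq_mul_sum_empiricalDistribution σ fun _ ↦ 1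
  simp only [sum_const, card_univ, Fintype.card_fin, nsmul_eq_mul, mul_one] at hcount
  exact (eq_div_of_mul_eq (Nat.cast_ne_zero.2 hN) (by rw [mul_comm, ← hcount])).trans
    (div_self (Nat.cast_ne_zero.2 hN))

theorem prod_eq_exp_neg_entropy_add_relEnt {θ : κ → ℝ} (hθ : ∀ k, 0 < θ k) (σ : Fin N → κ) :
    ∏ i, θ (σ i) = exp (-(N * (shannonEntropy (empiricalDistribution σ) +
      relEnt (empiricalDistribution σ) θ))) := by
  have hprod : ∏ i, θ (σ i) = exp (∑ i, log (θ (σ i))) := by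
    rw [exp_sum]
    exact prod_congr rfl fun i _ ↦ (exp_log (hθ _)).symm
  rw [hprod, sum_apply_eq_mul_sum_empiricalDistribution σ fun k ↦ log (θ k), shannonEntropy, relEnt,
    ← sum_add_distrib, ← mul_neg, ← sum_neg_distrib]
  congr 2
  refine sum_congr rfl fun k _ ↦ ?_
  rcases eq_or_ne (empiricalDistribution σ k) 0 with hk | hk
  · simp [hk]
  · rw [log_div hk (hθ k).ne', negMulLog]
    ring

theorem sum_prod_mul_exp_sqrt_mul_le (hN : N ≠ 0) {θ : κ → ℝ} (hθ : θ ∈ stdSimplex ℝ κ) (k : κ)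
    {ε : ℝ} (hε : |ε| = 1) :
    ∑ σ : Fin N → κ, (∏ i, θ (σ i)) * exp (ε * (√N * (empiricalDistribution σ k - θ k))) ≤
      exp 1 := by
  have hNpos : (0 : ℝ) < N := by positivity
  set φ : κ → ℝ := fun l ↦ ε * (√N)⁻¹ * ((if l = k then 1 else 0) - θ k) with hφ
  have hmean {m : κ → ℝ} (hm : m ∈ stdSimplex ℝ κ) :
      ∑ l, m l * φ l = ε * (√N)⁻¹ * (m k - θ k) := by
    have hindicator : ∑ l, m l * (if l = k then 1 else 0) = m k := by simp
    simp only [hφ, mul_left_comm _ (ε * (√N)⁻¹), ← mul_sum, mul_sub, sum_sub_distrib, hindicator,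
      ← sum_mul, hm.2, one_mul]
  have hbound l : |φ l| ≤ (√N)⁻¹ := by
    have hθk := mem_Icc_of_mem_stdSimplex hθ k
    have : |(if l = k then (1 : ℝ) else 0) - θ k| ≤ 1 := by
      rw [abs_le]
      split_ifs <;> constructor <;> linarith [hθk.1, hθk.2]
    rw [hφ, abs_mul, abs_mul, hε, one_mul, abs_of_nonneg (by positivity)]
    exact mul_le_of_le_one_right (by positivity) this
  have hmgf := sum_prod_mul_exp_le (N := N) hθ (by rw [hmean hθ, sub_self, mul_zero]) hbound
    (inv_le_one_of_one_le₀ (one_le_sqrt.2 (by exact_mod_cast Nat.one_le_iff_ne_zero.2 hN)))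
  rw [inv_pow, sq_sqrt hNpos.le, mul_inv_cancel₀ hNpos.ne'] at hmgf
  refine (sum_congr rfl fun σ _ ↦ ?_).trans_le hmgf
  rw [sum_apply_eq_mul_sum_empiricalDistribution,
    hmean (empiricalDistribution_mem_stdSimplex hN σ)]
  congr 2
  have : (N : ℝ) * (√N)⁻¹ = √N := by rw [← div_eq_mul_inv, div_sqrt]
  linear_combination -(ε * (empiricalDistribution σ k - θ k)) * this

theorem sum_prod_mul_norm_pow_four_le (hN : N ≠ 0) {θ : κ → ℝ} (hθ : θ ∈ stdSimplex ℝ κ) :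
    ∑ σ : Fin N → κ, (∏ i, θ (σ i)) * ‖√N • (empiricalDistribution σ - θ)‖ ^ 4 ≤
      48 * exp 1 * Fintype.card κ := by
  have hcoord (k : κ) : ∑ σ : Fin N → κ, (∏ i, θ (σ i)) *
      (√N * (empiricalDistribution σ k - θ k)) ^ 4 ≤ 48 * exp 1 := by
    have hplus := sum_prod_mul_exp_sqrt_mul_le hN hθ k (ε := 1) (by simp)
    have hminus := sum_prod_mul_exp_sqrt_mul_le hN hθ k (ε := -1) (by simp)
    simp only [one_mul, neg_one_mul] at hplus hminus
    calc _ ≤ ∑ σ : Fin N → κ, 24 * ((∏ i, θ (σ i)) *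
          exp (√N * (empiricalDistribution σ k - θ k)) + (∏ i, θ (σ i)) *
          exp (-(√N * (empiricalDistribution σ k - θ k)))) := by
          refine sum_le_sum fun σ _ ↦ ?_
          rw [← mul_add, mul_left_comm]
          exact mul_le_mul_of_nonneg_left (pow_four_le_mul_exp_add_exp_neg _)
            (prod_nonneg fun i _ ↦ hθ.1 _)
      _ ≤ 48 * exp 1 := by
          rw [← mul_sum, sum_add_distrib]
          linarith
  calc _ ≤ ∑ σ : Fin N → κ, (∏ i, θ (σ i)) *
        ∑ k, (√N * (empiricalDistribution σ k - θ k)) ^ 4 :=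
        sum_le_sum fun σ _ ↦ mul_le_mul_of_nonneg_left
          (norm_pow_four_le_sum_pow_four _) (prod_nonneg fun i _ ↦ hθ.1 _)
    _ = ∑ k, ∑ σ : Fin N → κ, (∏ i, θ (σ i)) *
        (√N * (empiricalDistribution σ k - θ k)) ^ 4 := by
        simp only [mul_sum]
        exact sum_comm
    _ ≤ ∑ _k : κ, 48 * exp 1 := sum_le_sum fun k _ ↦ hcoord k
    _ = 48 * exp 1 * Fintype.card κ := by rw [sum_const, card_univ, nsmul_eq_mul, mul_comm]

end ProductMeasures

section MixturesOfProducts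

variable {κ Ω : Type*} [Fintype κ] [MeasurableSpace Ω]

/-- The mixture over `ω ∼ P` of the laws of `N` independent samples from `θ ω`. -/
noncomputable def productMixture {N : ℕ} (P : Measure Ω) (θ : Ω → κ → ℝ) (σ : Fin N → κ) : ℝ :=
  ∫ ω, ∏ i, θ ω (σ i) ∂P

/-- The density of `productMixture P θ` with respect to `exp (-N * shannonEntropy)`, as a function
of the empirical distribution `m`. -/
noncomputable def mixtureDensity (P : Measure Ω) (θ : Ω → κ → ℝ) (N : ℕ) (m : κ → ℝ) : ℝ :=
  ∫ ω, exp (-(N * relEnt m (θ ω))) ∂P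

variable {P : Measure Ω} {θ : Ω → κ → ℝ} {N : ℕ} {m p : κ → ℝ} {ρ : Ω → ℝ}

theorem productMixture_eq_exp_mul_mixtureDensity [DecidableEq κ] (hpos : ∀ ω k, 0 < θ ω k)
    (σ : Fin N → κ) : productMixture P θ σ =
      exp (-(N * shannonEntropy (empiricalDistribution σ))) *
        mixtureDensity P θ N (empiricalDistribution σ) := by
  rw [productMixture, mixtureDensity, ← integral_const_mul]
  congr with ω
  rw [prod_eq_exp_neg_entropy_add_relEnt (hpos ω), ← exp_add]
  ring_nf

theorem exp_neg_mul_relEnt_le_one (hm : m ∈ stdSimplex ℝ κ) {θ : κ → ℝ}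
    (hθ : θ ∈ stdSimplex ℝ κ) (hpos : ∀ k, 0 < θ k) : exp (-(N * relEnt m θ)) ≤ 1 :=
  exp_le_one_iff.2 <| neg_nonpos.2 <|
    mul_nonneg N.cast_nonneg (relEnt_nonneg hm.1 hpos (hm.2.trans hθ.2.symm))

theorem measurable_relEnt_right (m : κ → ℝ) : Measurable (relEnt m) := by
  unfold relEnt
  fun_prop

theorem integrable_exp_neg_mul_relEnt [IsFiniteMeasure P] (hθ : Measurable θ)
    (hmem : ∀ ω, θ ω ∈ stdSimplex ℝ κ) (hpos : ∀ ω k, 0 < θ ω k) (hm : m ∈ stdSimplex ℝ κ) :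
    Integrable (fun ω ↦ exp (-(N * relEnt m (θ ω)))) P := by
  refine .of_bound (C := 1) ?_ (.of_forall fun ω ↦ ?_)
  · exact (measurable_exp.comp
      (((measurable_relEnt_right m).comp hθ).const_mul _).neg).aestronglyMeasurable
  · rw [norm_eq_abs, abs_of_pos (exp_pos _)]
    exact exp_neg_mul_relEnt_le_one hm (hmem ω) (hpos ω)

theorem mixtureDensity_le_one [IsProbabilityMeasure P] (hθ : Measurable θ)
    (hmem : ∀ ω, θ ω ∈ stdSimplex ℝ κ) (hpos : ∀ ω k, 0 < θ ω k) (hm : m ∈ stdSimplex ℝ κ) :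
    mixtureDensity P θ N m ≤ 1 :=
  (integral_mono (integrable_exp_neg_mul_relEnt hθ hmem hpos hm) (integrable_const 1) fun ω ↦
    exp_neg_mul_relEnt_le_one hm (hmem ω) (hpos ω)).trans_eq (by simp)

theorem mul_relEnt_le_mul_norm_sub_sq {θ : κ → ℝ} {b : ℝ} (hm : m ∈ stdSimplex ℝ κ)
    (hθ : θ ∈ stdSimplex ℝ κ) (hb : 0 < b) (hbθ : ∀ k, b ≤ θ k) :
    N * relEnt m θ ≤ Fintype.card κ / b * ‖√N • (m - θ)‖ ^ 2 := by
  calc N * relEnt m θ ≤ N * ((∑ k, (m - θ) k ^ 2) / b) := by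
        gcongr
        exact relEnt_le_sum_sq_div hm.1 hb hbθ (hm.2.trans hθ.2.symm)
    _ ≤ N * (Fintype.card κ * ‖m - θ‖ ^ 2 / b) := by
        gcongr
        exact sum_sq_le_card_mul_norm_sq _
    _ = Fintype.card κ / b * ‖√N • (m - θ)‖ ^ 2 := by
        rw [norm_smul, mul_pow, norm_eq_abs, sq_abs, sq_sqrt N.cast_nonneg]
        ring

theorem exp_mul_integral_exp_le_mixtureDensity [IsFiniteMeasure P] {b : ℝ} (hθ : Measurable θ)
    (hmem : ∀ ω, θ ω ∈ stdSimplex ℝ κ) (hb : 0 < b) (hbθ : ∀ ω k, b ≤ θ ω k)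
    (hm : m ∈ stdSimplex ℝ κ) (hρ : ∀ ω, ‖√N • (θ ω - p)‖ ≤ ρ ω) :
    exp (-(2 * Fintype.card κ / b) * ‖√N • (m - p)‖ ^ 2) *
        ∫ ω, exp (-(2 * Fintype.card κ / b) * ρ ω ^ 2) ∂P ≤ mixtureDensity P θ N m := by
  rw [← integral_const_mul]
  refine integral_mono_of_nonneg (.of_forall fun ω ↦ by positivity)
    (integrable_exp_neg_mul_relEnt hθ hmem (fun ω k ↦ hb.trans_le (hbθ ω k)) hm)
    (.of_forall fun ω ↦ ?_)
  have htriangle : ‖√N • (m - θ ω)‖ ≤ ‖√N • (m - p)‖ + ρ ω := by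
    rw [← sub_sub_sub_cancel_right m (θ ω) p, smul_sub]
    exact (norm_sub_le _ _).trans (by gcongr; exact hρ ω)
  have hsq : ‖√N • (m - θ ω)‖ ^ 2 ≤ 2 * (‖√N • (m - p)‖ ^ 2 + ρ ω ^ 2) :=
    (pow_le_pow_left₀ (norm_nonneg _) htriangle 2).trans (add_sq_le)
  have hbound := (mul_relEnt_le_mul_norm_sub_sq (N := N) hm (hmem ω) hb (hbθ ω)).trans
    (mul_le_mul_of_nonneg_left hsq (by positivity))
  change exp _ * exp _ ≤ exp _
  rw [← exp_add, exp_le_exp]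
  linarith [show Fintype.card κ / b * (2 * (‖√N • (m - p)‖ ^ 2 + ρ ω ^ 2)) =
    2 * Fintype.card κ / b * ‖√N • (m - p)‖ ^ 2 + 2 * Fintype.card κ / b * ρ ω ^ 2 by ring]

theorem integrable_prod_apply [IsFiniteMeasure P] (hθ : Measurable θ)
    (hmem : ∀ ω, θ ω ∈ stdSimplex ℝ κ) (σ : Fin N → κ) :
    Integrable (fun ω ↦ ∏ i, θ ω (σ i)) P := by
  refine .of_bound (C := 1) ?_ (.of_forall fun ω ↦ ?_)
  · exact (Finset.measurable_prod _ fun i _ ↦ (measurable_pi_apply (σ i)).comp hθ)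
      |>.aestronglyMeasurable
  · rw [norm_prod]
    refine prod_le_one (fun i _ ↦ norm_nonneg _) fun i _ ↦ ?_
    rw [norm_eq_abs, abs_of_nonneg ((hmem ω).1 _)]
    exact (mem_Icc_of_mem_stdSimplex (hmem ω) _).2

theorem sum_productMixture [IsFiniteMeasure P] (hθ : Measurable θ)
    (hmem : ∀ ω, θ ω ∈ stdSimplex ℝ κ) :
    ∑ σ : Fin N → κ, productMixture P θ σ = P.real Set.univ := by
  simp only [productMixture]
  rw [← integral_finsetSum _ fun σ _ ↦ integrable_prod_apply hθ hmem σ]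
  simp only [sum_prod_eq_one (hmem _).2, integral_const, smul_eq_mul, mul_one]

theorem sum_productMixture_mul_norm_pow_four_le [DecidableEq κ] [IsProbabilityMeasure P]
    (hN : N ≠ 0) (hθ : Measurable θ) (hmem : ∀ ω, θ ω ∈ stdSimplex ℝ κ)
    (hρ : ∀ ω, ‖√N • (θ ω - p)‖ ≤ ρ ω) (hint : Integrable (fun ω ↦ ρ ω ^ 4) P) :
    ∑ σ : Fin N → κ, productMixture P θ σ * ‖√N • (empiricalDistribution σ - p)‖ ^ 4 ≤
      8 * (48 * exp 1 * Fintype.card κ + ∫ ω, ρ ω ^ 4 ∂P) := by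
  have hpoint ω : ∑ σ : Fin N → κ, (∏ i, θ ω (σ i)) *
      ‖√N • (empiricalDistribution σ - p)‖ ^ 4 ≤
        8 * (48 * exp 1 * Fintype.card κ + ρ ω ^ 4) := by
    have hsplit (σ : Fin N → κ) : ‖√N • (empiricalDistribution σ - p)‖ ^ 4 ≤
        8 * (‖√N • (empiricalDistribution σ - θ ω)‖ ^ 4 + ρ ω ^ 4) := by
      rw [← sub_add_sub_cancel _ (θ ω) p, smul_add]
      calc _ ≤ (‖√N • (empiricalDistribution σ - θ ω)‖ + ρ ω) ^ 4 := by
            gcongr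
            exact (norm_add_le _ _).trans (by gcongr; exact hρ ω)
        _ ≤ 2 ^ (4 - 1) * (‖√N • (empiricalDistribution σ - θ ω)‖ ^ 4 + ρ ω ^ 4) :=
            add_pow_le (norm_nonneg _) ((norm_nonneg _).trans (hρ ω)) 4
        _ = _ := by norm_num
    calc _ ≤ ∑ σ : Fin N → κ, (∏ i, θ ω (σ i)) *
          (8 * (‖√N • (empiricalDistribution σ - θ ω)‖ ^ 4 + ρ ω ^ 4)) :=
          sum_le_sum fun σ _ ↦ mul_le_mul_of_nonneg_left (hsplit σ)
            (prod_nonneg fun i _ ↦ (hmem ω).1 _)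
      _ = 8 * (∑ σ : Fin N → κ, (∏ i, θ ω (σ i)) *
          ‖√N • (empiricalDistribution σ - θ ω)‖ ^ 4 + ρ ω ^ 4) := by
          simp only [mul_left_comm _ (8 : ℝ), ← mul_sum, mul_add, sum_add_distrib, ← sum_mul,
            sum_prod_eq_one (hmem ω).2, one_mul]
      _ ≤ _ := by
          gcongr
          exact sum_prod_mul_norm_pow_four_le hN (hmem ω)
  have hterm (σ : Fin N → κ) := (integrable_prod_apply (P := P) hθ hmem σ).mul_const
    (‖√N • (empiricalDistribution σ - p)‖ ^ 4)
  simp only [productMixture, ← integral_mul_const]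
  rw [← integral_finsetSum _ fun σ _ ↦ hterm σ]
  refine (integral_mono (integrable_finsetSum _ fun σ _ ↦ hterm σ)
    (((integrable_const _).add hint).const_mul 8) hpoint).trans_eq ?_
  rw [integral_const_mul, integral_add' (integrable_const _) hint]
  simp

end MixturesOfProducts

section MixtureLimits

variable {κ Ω ι : Type*} [Fintype κ] [MeasurableSpace Ω] {P : Measure Ω} [IsFiniteMeasure P]
  {l : Filter ι} [l.IsCountablyGenerated] {N : ι → ℕ} {θ : ι → Ω → κ → ℝ} {m : ι → κ → ℝ}

theorem tendsto_mixtureDensity {φ : Ω → ℝ} (hθ : ∀ᶠ i in l, Measurable (θ i))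
    (hmem : ∀ᶠ i in l, ∀ ω, θ i ω ∈ stdSimplex ℝ κ) (hpos : ∀ᶠ i in l, ∀ ω k, 0 < θ i ω k)
    (hm : ∀ᶠ i in l, m i ∈ stdSimplex ℝ κ)
    (hφ : ∀ ω, Tendsto (fun i ↦ exp (-(N i * relEnt (m i) (θ i ω)))) l (𝓝 (φ ω))) :
    Tendsto (fun i ↦ mixtureDensity P (θ i) (N i) (m i)) l (𝓝 (∫ ω, φ ω ∂P)) := by
  refine tendsto_integral_filter_of_dominated_convergence (fun _ ↦ 1) ?_ ?_
    (integrable_const _) (.of_forall hφ)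
  · filter_upwards [hθ, hmem, hpos, hm] with i h₁ h₂ h₃ h₄
    exact (integrable_exp_neg_mul_relEnt h₁ h₂ h₃ h₄).aestronglyMeasurable
  · filter_upwards [hmem, hpos, hm] with i h₁ h₂ h₃
    refine .of_forall fun ω ↦ ?_
    rw [norm_eq_abs, abs_of_pos (exp_pos _)]
    exact exp_neg_mul_relEnt_le_one h₃ (h₁ ω) (h₂ ω)

theorem tendsto_mixtureDensity_of_tendsto_sqrt_smul {p y : κ → ℝ} {ζ : Ω → κ → ℝ}
    (hN : Tendsto N l atTop) (hp : ∀ k, 0 < p k) (hθ : ∀ᶠ i in l, Measurable (θ i))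
    (hmem : ∀ᶠ i in l, ∀ ω, θ i ω ∈ stdSimplex ℝ κ) (hpos : ∀ᶠ i in l, ∀ ω k, 0 < θ i ω k)
    (hm : ∀ᶠ i in l, m i ∈ stdSimplex ℝ κ)
    (hζ : ∀ ω, Tendsto (fun i ↦ √(N i) • (θ i ω - p)) l (𝓝 (ζ ω)))
    (hy : Tendsto (fun i ↦ √(N i) • (m i - p)) l (𝓝 y)) :
    Tendsto (fun i ↦ mixtureDensity P (θ i) (N i) (m i)) l
      (𝓝 (∫ ω, exp (-(1 / 2 * ∑ k, (y k - ζ ω k) ^ 2 / p k)) ∂P)) := by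
  have hN' : Tendsto (fun i ↦ (N i : ℝ)) l atTop := tendsto_natCast_atTop_atTop.comp hN
  refine tendsto_mixtureDensity hθ hmem hpos hm fun ω ↦ ?_
  refine (continuous_exp.tendsto _).comp (tendsto_mul_relEnt (v := y - ζ ω) hN' hp ?_ ?_ ?_).neg
  · exact tendsto_of_tendsto_sqrt_smul_sub hN' (hζ ω)
  · exact (hy.sub (hζ ω)).congr fun i ↦ by rw [← smul_sub, sub_sub_sub_cancel_right]
  · filter_upwards [hm, hmem] with i h₁ h₂
    rw [h₁.2, (h₂ ω).2]

theorem tendsto_mixtureDensity_zero {p m₀ : κ → ℝ}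
    (hN : Tendsto N l atTop) (hne : p ≠ m₀) (hθ : ∀ᶠ i in l, Measurable (θ i))
    (hmem : ∀ᶠ i in l, ∀ ω, θ i ω ∈ stdSimplex ℝ κ) (hpos : ∀ᶠ i in l, ∀ ω k, 0 < θ i ω k)
    (hm : ∀ᶠ i in l, m i ∈ stdSimplex ℝ κ) (hθp : ∀ ω, Tendsto (fun i ↦ θ i ω) l (𝓝 p))
    (hm₀ : Tendsto m l (𝓝 m₀)) :
    Tendsto (fun i ↦ mixtureDensity P (θ i) (N i) (m i)) l (𝓝 0) := by
  obtain ⟨k, hk⟩ := Function.ne_iff.1 hne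
  rw [← integral_zero Ω ℝ (μ := P)]
  refine tendsto_mixtureDensity hθ hmem hpos hm fun ω ↦ ?_
  have hgap : Tendsto (fun i ↦ (m i k - θ i ω k) ^ 2 / 4) l (𝓝 ((m₀ k - p k) ^ 2 / 4)) :=
    (((tendsto_pi_nhds.1 hm₀ k).sub (tendsto_pi_nhds.1 (hθp ω) k)).pow 2).div_const 4
  have hdiv : Tendsto (fun i ↦ (N i : ℝ) * ((m i k - θ i ω k) ^ 2 / 4)) l atTop :=
    (tendsto_natCast_atTop_atTop.comp hN).atTop_mul_pos
      (by have := sub_ne_zero.2 (Ne.symm hk); positivity) hgap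
  refine tendsto_exp_neg_atTop_nhds_zero.comp (tendsto_atTop_mono' l ?_ hdiv)
  filter_upwards [hm, hmem, hpos] with i h₁ h₂ h₃
  exact mul_le_mul_of_nonneg_left (sq_sub_le_relEnt h₁ (h₂ ω) (h₃ ω) k) (N i).cast_nonneg

end MixtureLimits

section TruncatedGaussianMixture

variable {d : ℕ} {δ : ℝ} {a : Fin d → ℝ} {S : Matrix (Fin d) (Fin d) ℝ} {N : ℕ}

/-- The vector `x` if its Euclidean norm is at most `R`, and `0` otherwise. -/
noncomputable def truncate (R : ℝ) (x : Fin d → ℝ) : Fin d → ℝ :=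
  if √(∑ k, x k ^ 2) ≤ R then x else 0

theorem norm_truncate_le (R : ℝ) (x : Fin d → ℝ) : ‖truncate R x‖ ≤ ‖x‖ := by
  unfold truncate
  split_ifs
  · rfl
  · simp

theorem norm_truncate_le_radius {R : ℝ} (hR : 0 ≤ R) (x : Fin d → ℝ) : ‖truncate R x‖ ≤ R := by
  unfold truncate
  split_ifs with h
  · exact (le_sqrt_of_sq_le (norm_sq_le_sum_sq x)).trans h
  · simpa using hR

theorem measurable_truncate (R : ℝ) : Measurable (truncate R : (Fin d → ℝ) → Fin d → ℝ) :=
  .ite (measurableSet_le (by fun_prop) measurable_const) measurable_id measurable_const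

theorem eventually_truncate_eq (x : Fin d → ℝ) : ∀ᶠ R in atTop, truncate R x = x := by
  filter_upwards [eventually_ge_atTop √(∑ k, x k ^ 2)] with R hR using if_pos hR

/-- The parameter `M + ξ / √N` of the random product measure, for a value `x` of the Gaussian
vector whose truncation at radius `N ^ δ` is `ξ`. -/
noncomputable def truncatedParameter (δ : ℝ) (a : Fin d → ℝ) (N : ℕ) (x : Fin d → ℝ) :
    Fin (d + 1) → ℝ :=
  full (a + (√N)⁻¹ • truncate ((N : ℝ) ^ δ) x)

theorem measurable_truncatedParameter (δ : ℝ) (a : Fin d → ℝ) (N : ℕ) :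
    Measurable (truncatedParameter δ a N) :=
  continuous_full.measurable.comp (((measurable_truncate _).const_smul (√N)⁻¹).const_add a)

theorem sqrt_smul_full_add_sub_full (hN : N ≠ 0) (a y : Fin d → ℝ) :
    √N • (full (a + (√N)⁻¹ • y) - full a) = tangent y := by
  rw [full_sub_full, add_sub_cancel_left, tangent_smul, smul_smul, mul_inv_cancel₀ (by positivity),
    one_smul]

theorem norm_sqrt_smul_truncatedParameter_sub_le (hN : N ≠ 0) (x : Fin d → ℝ) :
    ‖√N • (truncatedParameter δ a N x - full a)‖ ≤ (d + 1) * ‖x‖ := by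
  rw [truncatedParameter, sqrt_smul_full_add_sub_full hN]
  exact (norm_tangent_le _).trans (by gcongr; exact norm_truncate_le _ x)

theorem tendsto_sqrt_smul_truncatedParameter_sub (hδ : 0 < δ) (a x : Fin d → ℝ) :
    Tendsto (fun N : ℕ ↦ √N • (truncatedParameter δ a N x - full a)) atTop (𝓝 (tangent x)) := by
  have hradius : Tendsto (fun N : ℕ ↦ (N : ℝ) ^ δ) atTop atTop :=
    (tendsto_rpow_atTop hδ).comp tendsto_natCast_atTop_atTop
  refine tendsto_const_nhds.congr' ?_
  filter_upwards [hradius.eventually (eventually_truncate_eq x), eventually_ne_atTop 0] with N h hN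
  rw [truncatedParameter, sqrt_smul_full_add_sub_full hN, h]

theorem norm_truncatedParameter_sub_le (hN : N ≠ 0) (x : Fin d → ℝ) :
    ‖truncatedParameter δ a N x - full a‖ ≤ (d + 1) * (N : ℝ) ^ (-(1 / 2 - δ)) := by
  have hNpos : (0 : ℝ) < N := by positivity
  rw [truncatedParameter, full_sub_full, add_sub_cancel_left]
  calc _ ≤ (d + 1) * ‖(√N)⁻¹ • truncate ((N : ℝ) ^ δ) x‖ := norm_tangent_le _
    _ ≤ (d + 1) * ((√N)⁻¹ * (N : ℝ) ^ δ) := by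
        rw [norm_smul, norm_of_nonneg (by positivity)]
        gcongr
        exact norm_truncate_le_radius (by positivity) x
    _ = (d + 1) * (N : ℝ) ^ (-(1 / 2 - δ)) := by
        rw [sqrt_eq_rpow, ← rpow_neg hNpos.le, ← rpow_add hNpos]
        ring_nf

theorem exists_eventually_le_truncatedParameter (hδ : δ < 1 / 2) (ha : ∀ k, 0 < full a k) :
    ∃ b > 0, ∀ᶠ N : ℕ in atTop, ∀ x k, b ≤ truncatedParameter δ a N x k := by
  obtain ⟨k₀, hk₀⟩ := Finite.exists_min (full a)
  refine ⟨full a k₀ / 2, half_pos (ha k₀), ?_⟩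
  have hsmall : Tendsto (fun N : ℕ ↦ (d + 1) * (N : ℝ) ^ (-(1 / 2 - δ))) atTop (𝓝 0) := by
    rw [← mul_zero ((d : ℝ) + 1)]
    exact ((tendsto_rpow_neg_atTop (sub_pos.2 hδ)).comp tendsto_natCast_atTop_atTop).const_mul _
  filter_upwards [hsmall.eventually_le_const (half_pos (ha k₀)), eventually_ne_atTop 0]
    with N h hN x k
  have hcoord := (norm_le_pi_norm (truncatedParameter δ a N x - full a) k).trans
    ((norm_truncatedParameter_sub_le hN x).trans h)
  rw [Pi.sub_apply, norm_eq_abs] at hcoord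
  linarith [hk₀ k, (abs_le.1 hcoord).1]

theorem truncatedParameter_mem_stdSimplex {x : Fin d → ℝ}
    (h : ∀ k, 0 < truncatedParameter δ a N x k) :
    truncatedParameter δ a N x ∈ stdSimplex ℝ (Fin (d + 1)) :=
  ⟨fun k ↦ (h k).le, sum_full _⟩

theorem eventually_truncatedParameter_pos (hδ : δ < 1 / 2) (ha : ∀ k, 0 < full a k) :
    ∀ᶠ N : ℕ in atTop, ∀ x k, 0 < truncatedParameter δ a N x k := by
  obtain ⟨b, hb, hlow⟩ := exists_eventually_le_truncatedParameter hδ ha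
  filter_upwards [hlow] with N h x k using hb.trans_le (h x k)

theorem eventually_sum_productMixture_truncatedParameter (hδ : δ < 1 / 2)
    (ha : ∀ k, 0 < full a k) (hS : S.PosDef) : ∀ᶠ N : ℕ in atTop,
      ∑ σ : Fin N → Fin (d + 1),
        productMixture (gaussianMeasure S) (truncatedParameter δ a N) σ = 1 := by
  have := isProbabilityMeasure_gaussianMeasure hS
  filter_upwards [eventually_truncatedParameter_pos hδ ha] with N h
  rw [sum_productMixture (measurable_truncatedParameter _ _ _)
    fun x ↦ truncatedParameter_mem_stdSimplex (h x), probReal_univ]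

theorem exists_sum_productMixture_truncatedParameter_mul_norm_pow_four_le (hδ : δ < 1 / 2)
    (ha : ∀ k, 0 < full a k) (hS : S.PosDef) : ∃ C, ∀ᶠ N : ℕ in atTop,
      ∑ σ : Fin N → Fin (d + 1), productMixture (gaussianMeasure S) (truncatedParameter δ a N) σ *
        ‖√N • (empiricalDistribution σ - full a)‖ ^ 4 ≤ C := by
  have := isProbabilityMeasure_gaussianMeasure hS
  refine ⟨8 * (48 * exp 1 * Fintype.card (Fin (d + 1)) +
    ∫ x, ((d + 1) * ‖x‖) ^ 4 ∂gaussianMeasure S), ?_⟩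
  filter_upwards [eventually_truncatedParameter_pos hδ ha, eventually_ne_atTop 0] with N h hN
  refine sum_productMixture_mul_norm_pow_four_le hN (measurable_truncatedParameter _ _ _)
    (fun x ↦ truncatedParameter_mem_stdSimplex (h x))
    (norm_sqrt_smul_truncatedParameter_sub_le hN) ?_
  simp only [mul_pow]
  exact (integrable_norm_pow_four_gaussianMeasure hS).const_mul _

theorem exists_mul_exp_le_mixtureDensity_truncatedParameter (hδ : δ < 1 / 2)
    (ha : ∀ k, 0 < full a k) (hS : S.PosDef) : ∃ c > 0, ∃ C, ∀ᶠ N : ℕ in atTop,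
      ∀ m ∈ stdSimplex ℝ (Fin (d + 1)), c * exp (-C * ‖√N • (m - full a)‖ ^ 2) ≤
        mixtureDensity (gaussianMeasure S) (truncatedParameter δ a N) N m := by
  have := isProbabilityMeasure_gaussianMeasure hS
  obtain ⟨b, hb, hlow⟩ := exists_eventually_le_truncatedParameter hδ ha
  set C : ℝ := 2 * Fintype.card (Fin (d + 1)) / b
  have hint : Integrable (fun x : Fin d → ℝ ↦ exp (-C * ((d + 1) * ‖x‖) ^ 2))
      (gaussianMeasure S) := by
    refine .of_bound (C := 1) (by fun_prop) (.of_forall fun x ↦ ?_)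
    rw [norm_eq_abs, abs_of_pos (exp_pos _), exp_le_one_iff, neg_mul, neg_nonpos]
    positivity
  refine ⟨_, integral_exp_pos hint, C, ?_⟩
  filter_upwards [hlow, eventually_ne_atTop 0] with N h hN m hm
  rw [mul_comm]
  exact exp_mul_integral_exp_le_mixtureDensity (measurable_truncatedParameter _ _ _)
    (fun x ↦ truncatedParameter_mem_stdSimplex fun k ↦ hb.trans_le (h x k)) hb h hm
    (norm_sqrt_smul_truncatedParameter_sub_le hN)

theorem tendsto_add_inv_sqrt_smul (a y : Fin d → ℝ) :
    Tendsto (fun i : ℕ × (Fin d → ℝ) ↦ a + (√i.1)⁻¹ • i.2) (atTop ×ˢ 𝓝 y) (𝓝 a) := by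
  have hsqrt : Tendsto (fun i : ℕ × (Fin d → ℝ) ↦ (√i.1)⁻¹) (atTop ×ˢ 𝓝 y) (𝓝 0) :=
    (tendsto_sqrt_atTop.comp (tendsto_natCast_atTop_atTop.comp tendsto_fst)).inv_tendsto_atTop
  simpa using tendsto_const_nhds.add (hsqrt.smul tendsto_snd)

theorem eventually_full_add_inv_sqrt_smul_mem_stdSimplex (ha : ∀ k, 0 < full a k)
    (y : Fin d → ℝ) : ∀ᶠ i : ℕ × (Fin d → ℝ) in atTop ×ˢ 𝓝 y,
      full (a + (√i.1)⁻¹ • i.2) ∈ stdSimplex ℝ (Fin (d + 1)) := by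
  have hfull := (continuous_full.tendsto a).comp (tendsto_add_inv_sqrt_smul a y)
  filter_upwards [eventually_all.2 fun k ↦
    (tendsto_pi_nhds.1 hfull k).eventually_const_le (ha k)] with i hi using ⟨hi, sum_full _⟩

theorem tendsto_mixtureDensity_truncatedParameter (hδ₀ : 0 < δ) (hδ : δ < 1 / 2)
    (ha : ∀ k, 0 < full a k) (hS : S.PosDef) (y : Fin d → ℝ) :
    Tendsto (fun i : ℕ × (Fin d → ℝ) ↦ mixtureDensity (gaussianMeasure S)
        (truncatedParameter δ a i.1) i.1 (full (a + (√i.1)⁻¹ • i.2))) (atTop ×ˢ 𝓝 y)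
      (𝓝 (√((categoricalCov a).det / (categoricalCov a + S).det) *
        exp (-(1 / 2) * (y ⬝ᵥ (categoricalCov a + S)⁻¹ *ᵥ y)))) := by
  have := isProbabilityMeasure_gaussianMeasure hS
  have hpos := (eventually_truncatedParameter_pos hδ ha).prod_inl (𝓝 y)
  rw [← integral_exp_neg_half_sub_gaussianMeasure (posDef_categoricalCov_of_full_pos ha) hS]
  simp only [← sum_tangent_sq_div_full ha, neg_mul]
  simp only [tangent_sub, Pi.sub_apply]
  refine tendsto_mixtureDensity_of_tendsto_sqrt_smul tendsto_fst ha
    (.of_forall fun i ↦ measurable_truncatedParameter _ _ _)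
    (hpos.mono fun i hi x ↦ truncatedParameter_mem_stdSimplex (hi x)) hpos
    (eventually_full_add_inv_sqrt_smul_mem_stdSimplex ha y)
    (fun x ↦ (tendsto_sqrt_smul_truncatedParameter_sub hδ₀ a x).comp tendsto_fst) ?_
  refine ((continuous_tangent.tendsto y).comp tendsto_snd).congr' ?_
  filter_upwards [tendsto_fst.eventually (eventually_ne_atTop 0)] with i hi
  exact (sqrt_smul_full_add_sub_full hi a i.2).symm

theorem tendsto_mixtureDensity_truncatedParameter_zero (hδ₀ : 0 < δ) (hδ : δ < 1 / 2)
    {a' : Fin d → ℝ} (ha : ∀ k, 0 < full a k) (ha' : ∀ k, 0 < full a' k) (hne : a ≠ a')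
    (hS : S.PosDef) (y : Fin d → ℝ) :
    Tendsto (fun i : ℕ × (Fin d → ℝ) ↦ mixtureDensity (gaussianMeasure S)
      (truncatedParameter δ a i.1) i.1 (full (a' + (√i.1)⁻¹ • i.2))) (atTop ×ˢ 𝓝 y) (𝓝 0) := by
  have := isProbabilityMeasure_gaussianMeasure hS
  have hpos := (eventually_truncatedParameter_pos hδ ha).prod_inl (𝓝 y)
  have hfull : full a ≠ full a' := fun h ↦ hne <| funext fun k ↦ by
    simpa using congrFun h k.castSucc
  refine tendsto_mixtureDensity_zero tendsto_fst hfull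
    (.of_forall fun i ↦ measurable_truncatedParameter _ _ _)
    (hpos.mono fun i hi x ↦ truncatedParameter_mem_stdSimplex (hi x)) hpos
    (eventually_full_add_inv_sqrt_smul_mem_stdSimplex ha' y) (fun x ↦ ?_)
    ((continuous_full.tendsto a').comp (tendsto_add_inv_sqrt_smul a' y))
  exact (tendsto_of_tendsto_sqrt_smul_sub tendsto_natCast_atTop_atTop
    (tendsto_sqrt_smul_truncatedParameter_sub hδ₀ a x)).comp tendsto_fst

end TruncatedGaussianMixture

section GaussianSums

variable {d : ℕ} {a y z : Fin d → ℝ} {c : ℝ} {N : ℕ}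

theorem exists_isFiniteMeasure_mul_exp_le_measureReal_closedBall (d : ℕ) (hc : 0 < c) {r : ℝ}
    (hr : 0 < r) : ∃ Q : Measure (Fin d → ℝ), IsFiniteMeasure Q ∧
      ∃ v > 0, ∀ z, v * exp (-c * ‖z‖ ^ 2) ≤ Q.real (Metric.closedBall z r) := by
  have hint := integrable_exp_neg_mul_norm_sq (n := Fin d) (half_pos hc)
  refine ⟨_, isFiniteMeasure_withDensity_ofReal hint.2,
    volume.real (Metric.closedBall (0 : Fin d → ℝ) r) * exp (-c * r ^ 2),
    mul_pos (ENNReal.toReal_pos (Metric.measure_closedBall_pos _ _ hr).ne'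
      measure_closedBall_lt_top.ne) (exp_pos _), fun z ↦ ?_⟩
  have hvol : volume.real (Metric.closedBall (0 : Fin d → ℝ) r) =
      volume.real (Metric.closedBall z r) := by
    simp only [measureReal_def, Measure.addHaar_closedBall_center volume z]
  rw [hvol, measureReal_def (Measure.withDensity _ _), withDensity_apply _ measurableSet_closedBall,
    ← integral_eq_lintegral_of_nonneg_ae (.of_forall fun _ ↦ (exp_pos _).le) (by fun_prop),
    mul_assoc, ← exp_add, mul_comm]
  refine (setIntegral_ge_of_const_le_real measurableSet_closedBall measure_closedBall_lt_top.ne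
    (fun y hy ↦ exp_le_exp.2 ?_) hint.integrableOn)
  have hnorm : ‖y‖ ^ 2 ≤ 2 * (‖z‖ ^ 2 + r ^ 2) := by
    refine (pow_le_pow_left₀ (norm_nonneg _) ?_ 2).trans add_sq_le
    linarith [norm_le_norm_add_norm_sub' y z, mem_closedBall_iff_norm.1 hy]
  nlinarith

theorem sub_le_full_add_inv_sqrt_smul {ε b r : ℝ} (hN : N ≠ 0) (hε₀ : 0 ≤ ε) (hε₁ : ε ≤ 1)
    (hy : a + (√N)⁻¹ • y ∈ redSimplex d) (hz : ‖z - (1 - ε) • y‖ ≤ r) (hb : ∀ k, b ≤ full a k)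
    (k : Fin (d + 1)) : ε * b - (d + 1) * r ≤ full (a + (√N)⁻¹ • z) k := by
  have hsplit : full (a + (√N)⁻¹ • z) = (1 - ε) • full (a + (√N)⁻¹ • y) + ε • full a +
      (√N)⁻¹ • tangent (z - (1 - ε) • y) := by
    simp only [full_add, tangent_smul, tangent_sub]
    module
  have hpert : ‖(√N)⁻¹ • tangent (z - (1 - ε) • y)‖ ≤ (d + 1) * r := by
    rw [norm_smul, norm_of_nonneg (by positivity)]
    have hinv : (√N)⁻¹ ≤ 1 :=
      inv_le_one_of_one_le₀ (one_le_sqrt.2 (by exact_mod_cast Nat.one_le_iff_ne_zero.2 hN))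
    exact (mul_le_of_le_one_left (norm_nonneg _) hinv).trans
      ((norm_tangent_le _).trans (by gcongr))
  have hcoord := (norm_le_pi_norm _ k).trans hpert
  rw [norm_eq_abs] at hcoord
  have hfirst : 0 ≤ (1 - ε) * full (a + (√N)⁻¹ • y) k :=
    mul_nonneg (sub_nonneg.2 hε₁) ((full_mem_stdSimplex_iff.2 hy).1 k)
  rw [hsplit]
  simp only [Pi.add_apply, Pi.smul_apply, smul_eq_mul] at hcoord ⊢
  linarith [(abs_le.1 hcoord).1, mul_le_mul_of_nonneg_left (hb k) hε₀]

theorem mul_relEnt_full_add_inv_sqrt_smul_le {ε b r : ℝ} (hN : N ≠ 0) (hε : 0 ≤ ε)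
    (hy : a + (√N)⁻¹ • y ∈ redSimplex d) (hz : ‖z - (1 - ε) • y‖ ≤ r) (hb : 0 < b)
    (hlow : ∀ k, b ≤ full (a + (√N)⁻¹ • z) k) :
    N * relEnt (full (a + (√N)⁻¹ • y)) (full (a + (√N)⁻¹ • z)) ≤
      2 * (d + 1) ^ 3 / b * ((ε * ‖y‖) ^ 2 + r ^ 2) := by
  have hdist : ‖√N • (full (a + (√N)⁻¹ • y) - full (a + (√N)⁻¹ • z))‖ ≤
      (d + 1) * (ε * ‖y‖ + r) := by
    rw [← sub_sub_sub_cancel_right _ _ (full a), smul_sub, sqrt_smul_full_add_sub_full hN,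
      sqrt_smul_full_add_sub_full hN, ← tangent_sub]
    refine (norm_tangent_le _).trans ?_
    gcongr
    rw [show y - z = ε • y - (z - (1 - ε) • y) by module]
    refine (norm_sub_le _ _).trans (add_le_add ?_ hz)
    rw [norm_smul, norm_of_nonneg hε]
  calc _ ≤ Fintype.card (Fin (d + 1)) / b * ((d + 1) * (ε * ‖y‖ + r)) ^ 2 :=
        (mul_relEnt_le_mul_norm_sub_sq (full_mem_stdSimplex_iff.2 hy)
          ⟨fun k ↦ hb.le.trans (hlow k), sum_full _⟩ hb hlow).trans (by gcongr)
    _ ≤ Fintype.card (Fin (d + 1)) / b * ((d + 1) ^ 2 * (2 * ((ε * ‖y‖) ^ 2 + r ^ 2))) := by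
        rw [mul_pow]
        gcongr
        exact add_sq_le
    _ = _ := by
        rw [Fintype.card_fin]
        push_cast
        ring

-- Contracting towards `a` by the factor `1 - ε` keeps the parameter away from the boundary, at a
-- relative entropy cost of order `ε * ‖y‖ ^ 2`.
theorem exists_contraction_mul_relEnt_le (ha : ∀ k, 0 < full a k) (hc : 0 < c) :
    ∃ ε ∈ Set.Ioc (0 : ℝ) 1, ∃ r > 0, ∃ K, ∀ N : ℕ, N ≠ 0 → ∀ y : Fin d → ℝ,
      a + (√N)⁻¹ • y ∈ redSimplex d → ∀ z ∈ Metric.closedBall ((1 - ε) • y) r,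
        (∀ k, 0 < full (a + (√N)⁻¹ • z) k) ∧
        N * relEnt (full (a + (√N)⁻¹ • y)) (full (a + (√N)⁻¹ • z)) ≤ c * ‖y‖ ^ 2 + K := by
  obtain ⟨k₀, hk₀⟩ := Finite.exists_min (full a)
  set b := full a k₀
  have hb : 0 < b := ha k₀
  set ε := min 1 (b * c / (4 * (d + 1) ^ 3))
  have hε : 0 < ε := by positivity
  set r := ε * b / (2 * (d + 1)) with hr
  refine ⟨ε, ⟨hε, min_le_left _ _⟩, r, by positivity, 4 * (d + 1) ^ 3 / (ε * b) * r ^ 2,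
    fun N hN y hy z hz ↦ ?_⟩
  rw [mem_closedBall_iff_norm] at hz
  have hlow k : ε * b / 2 ≤ full (a + (√N)⁻¹ • z) k := by
    have h := sub_le_full_add_inv_sqrt_smul hN hε.le (min_le_left _ _) hy hz hk₀ k
    have : (d + 1) * r = ε * b / 2 := by rw [hr]; field_simp
    linarith
  refine ⟨fun k ↦ (by positivity : 0 < ε * b / 2).trans_le (hlow k), ?_⟩
  calc _ ≤ 2 * (d + 1) ^ 3 / (ε * b / 2) * ((ε * ‖y‖) ^ 2 + r ^ 2) :=
        mul_relEnt_full_add_inv_sqrt_smul_le hN hε.le hy hz (by positivity) hlow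
    _ = 4 * (d + 1) ^ 3 / b * ε * ‖y‖ ^ 2 + 4 * (d + 1) ^ 3 / (ε * b) * r ^ 2 := by
        field_simp
        ring
    _ ≤ c * ‖y‖ ^ 2 + 4 * (d + 1) ^ 3 / (ε * b) * r ^ 2 := by
        gcongr
        refine (mul_le_mul_of_nonneg_left (min_le_right _ _) (by positivity)).trans_eq ?_
        field_simp

/-- The parameter `a + y / √N` of a product measure, replaced by `a` where it is not positive. -/
noncomputable def clampedParameter (a : Fin d → ℝ) (N : ℕ) (y : Fin d → ℝ) : Fin (d + 1) → ℝ :=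
  open Classical in
  if ∀ k, 0 < full (a + (√N)⁻¹ • y) k then full (a + (√N)⁻¹ • y) else full a

theorem measurable_clampedParameter (a : Fin d → ℝ) (N : ℕ) :
    Measurable (clampedParameter a N) := by
  have hfull : Continuous fun y : Fin d → ℝ ↦ full (a + (√N)⁻¹ • y) :=
    continuous_full.comp (by fun_prop)
  refine .ite ?_ hfull.measurable measurable_const
  simp only [Set.ofPred_forall]
  exact .iInter fun k ↦ measurableSet_lt measurable_const
    ((continuous_apply k).comp hfull).measurable

theorem clampedParameter_pos (ha : ∀ k, 0 < full a k) (y : Fin d → ℝ) (k : Fin (d + 1)) :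
    0 < clampedParameter a N y k := by
  unfold clampedParameter
  split_ifs with h
  exacts [h k, ha k]

theorem clampedParameter_mem_stdSimplex (ha : ∀ k, 0 < full a k) (y : Fin d → ℝ) :
    clampedParameter a N y ∈ stdSimplex ℝ (Fin (d + 1)) := by
  refine ⟨fun k ↦ (clampedParameter_pos ha y k).le, ?_⟩
  unfold clampedParameter
  split_ifs <;> exact sum_full _

theorem exists_exp_le_mul_mixtureDensity_clampedParameter (ha : ∀ k, 0 < full a k) (hc : 0 < c) :
    ∃ Q : Measure (Fin d → ℝ), IsFiniteMeasure Q ∧ ∃ K, ∀ N : ℕ, N ≠ 0 →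
      ∀ y : Fin d → ℝ, a + (√N)⁻¹ • y ∈ redSimplex d → exp (-c * ‖y‖ ^ 2) ≤
        K * mixtureDensity Q (clampedParameter a N) N (full (a + (√N)⁻¹ • y)) := by
  obtain ⟨ε, ⟨hε₀, hε₁⟩, r, hr, K, hK⟩ := exists_contraction_mul_relEnt_le ha (half_pos hc)
  obtain ⟨Q, hQ, v, hv, hball⟩ :=
    exists_isFiniteMeasure_mul_exp_le_measureReal_closedBall d (half_pos hc) hr
  refine ⟨Q, hQ, v⁻¹ * exp K, fun N hN y hy ↦ ?_⟩
  set m := full (a + (√N)⁻¹ • y)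
  have hm : m ∈ stdSimplex ℝ (Fin (d + 1)) := full_mem_stdSimplex_iff.2 hy
  have hint := integrable_exp_neg_mul_relEnt (P := Q) (N := N) (measurable_clampedParameter a N)
    (clampedParameter_mem_stdSimplex ha) (clampedParameter_pos ha) hm
  have hcontract : ‖(1 - ε) • y‖ ^ 2 ≤ ‖y‖ ^ 2 := by
    rw [norm_smul, norm_of_nonneg (sub_nonneg.2 hε₁)]
    gcongr
    exact mul_le_of_le_one_left (norm_nonneg y) (by linarith)
  have hlower : exp (-(c / 2 * ‖y‖ ^ 2 + K)) * (v * exp (-(c / 2) * ‖y‖ ^ 2)) ≤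
      mixtureDensity Q (clampedParameter a N) N m := by
    calc _ ≤ exp (-(c / 2 * ‖y‖ ^ 2 + K)) * Q.real (Metric.closedBall ((1 - ε) • y) r) := by
          gcongr
          refine le_trans ?_ (hball _)
          exact mul_le_mul_of_nonneg_left
            (exp_le_exp.2 (mul_le_mul_of_nonpos_left hcontract (by linarith))) hv.le
      _ ≤ ∫ z in Metric.closedBall ((1 - ε) • y) r,
          exp (-(N * relEnt m (clampedParameter a N z))) ∂Q := by
          refine setIntegral_ge_of_const_le_real measurableSet_closedBall (measure_ne_top _ _)
            (fun z hz ↦ exp_le_exp.2 (neg_le_neg ?_)) hint.integrableOn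
          rw [clampedParameter, if_pos (hK N hN y hy z hz).1]
          exact (hK N hN y hy z hz).2
      _ ≤ _ := setIntegral_le_integral hint (.of_forall fun z ↦ (exp_pos _).le)
  calc exp (-c * ‖y‖ ^ 2) = v⁻¹ * exp K *
        (exp (-(c / 2 * ‖y‖ ^ 2 + K)) * (v * exp (-(c / 2) * ‖y‖ ^ 2))) := by
        rw [show -c * ‖y‖ ^ 2 = K + -(c / 2 * ‖y‖ ^ 2 + K) + -(c / 2) * ‖y‖ ^ 2 by ring,
          exp_add, exp_add]
        field_simp
    _ ≤ _ := by gcongr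

theorem exists_sum_exp_neg_shannonEntropy_mul_exp_le (ha : ∀ k, 0 < full a k) (hc : 0 < c) :
    ∃ B, ∀ N : ℕ, N ≠ 0 → ∑ σ : Fin N → Fin (d + 1),
      exp (-(N * shannonEntropy (empiricalDistribution σ))) *
        exp (-c * ‖√N • (Fin.init (empiricalDistribution σ) - a)‖ ^ 2) ≤ B := by
  obtain ⟨Q, hQ, K, hdom⟩ := exists_exp_le_mul_mixtureDensity_clampedParameter ha hc
  refine ⟨K * Q.real Set.univ, fun N hN ↦ ?_⟩
  rw [← sum_productMixture (N := N) (measurable_clampedParameter a N)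
    (clampedParameter_mem_stdSimplex ha), mul_sum]
  refine sum_le_sum fun σ _ ↦ ?_
  have hσ := empiricalDistribution_mem_stdSimplex hN σ
  have hpoint : a + (√N)⁻¹ • √N • (Fin.init (empiricalDistribution σ) - a) =
      Fin.init (empiricalDistribution σ) := by
    rw [smul_smul, inv_mul_cancel₀ (by positivity), one_smul, add_sub_cancel]
  have h := hdom N hN (√N • (Fin.init (empiricalDistribution σ) - a)) (by
    rwa [hpoint, ← full_mem_stdSimplex_iff, full_init hσ.2])
  rw [hpoint, full_init hσ.2] at h
  rw [productMixture_eq_exp_mul_mixtureDensity (clampedParameter_pos ha), mul_left_comm]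
  exact mul_le_mul_of_nonneg_left h (exp_pos _).le

end GaussianSums

theorem isBigO_dotProduct_mulVec_sub {n : Type*} [Fintype n] (B : Matrix n n ℝ) (a : n → ℝ)
    (l : Filter (n → ℝ)) : (fun x ↦ (x - a) ⬝ᵥ B *ᵥ (x - a)) =O[l] fun x ↦ ‖x - a‖ ^ 2 := by
  simp only [dotProduct, sq]
  refine IsBigO.fun_sum fun k _ ↦ .mul (.norm_right ?_) (.norm_right ?_)
  · exact (ContinuousLinearMap.proj (R := ℝ) (φ := fun _ : n ↦ ℝ) k).isBigO_sub _ _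
  · exact ((ContinuousLinearMap.proj (R := ℝ) (φ := fun _ : n ↦ ℝ) k).comp
      B.mulVecLin.toContinuousLinearMap).isBigO_sub _ _

section Gap

variable {d : ℕ} {ι : Type*} {V : (Fin d → ℝ) → ℝ} {M : ι → Fin d → ℝ}
  {H : ι → Matrix (Fin d) (Fin d) ℝ}

/-- `V` is the gap `max G - G` of a free energy functional `G` on the simplex whose maximizers are
the points `M j` of the interior, with nondegenerate Hessians `-H j`. -/
structure IsNondegenerateGap (V : (Fin d → ℝ) → ℝ) (M : ι → Fin d → ℝ)
    (H : ι → Matrix (Fin d) (Fin d) ℝ) : Prop where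
  mem_interior : ∀ j, M j ∈ interior (redSimplex d)
  continuousOn : ContinuousOn V (redSimplex d)
  pos : ∀ x ∈ redSimplex d, x ∉ Set.range M → 0 < V x
  posDef : ∀ j, (H j).PosDef
  expansion : ∀ j, (fun x ↦ V x - 1 / 2 * ((x - M j) ⬝ᵥ H j *ᵥ (x - M j)))
    =o[𝓝 (M j)] fun x ↦ ‖x - M j‖ ^ 2

namespace IsNondegenerateGap

variable (hV : IsNondegenerateGap V M H)

include hV

theorem full_pos (j : ι) (k : Fin (d + 1)) : 0 < full (M j) k :=
  full_pos_of_mem_interior (hV.mem_interior j) k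

theorem apply_eq_zero (j : ι) : V (M j) = 0 := by
  have h := ((hV.expansion j).bound one_pos).self_of_nhds
  simpa using h

theorem nonneg {x : Fin d → ℝ} (hx : x ∈ redSimplex d) : 0 ≤ V x := by
  by_cases hxM : x ∈ Set.range M
  · obtain ⟨j, rfl⟩ := hxM
    exact (hV.apply_eq_zero j).ge
  · exact (hV.pos x hx hxM).le

theorem isBigO_norm_sub_sq (j : ι) : V =O[𝓝 (M j)] fun x ↦ ‖x - M j‖ ^ 2 := by
  have h := (hV.expansion j).isBigO.add
    ((isBigO_dotProduct_mulVec_sub (H j) (M j) (𝓝 (M j))).const_mul_left (1 / 2))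
  simpa only [sub_add_cancel] using h

theorem norm_sub_sq_isBigO (j : ι) : (fun x ↦ ‖x - M j‖ ^ 2) =O[𝓝 (M j)] V := by
  obtain ⟨c, hc, hcH⟩ := exists_mul_norm_sq_le_dotProduct_mulVec (hV.posDef j)
  have hquad : (fun x ↦ ‖x - M j‖ ^ 2) =O[𝓝 (M j)]
      fun x ↦ 1 / 2 * ((x - M j) ⬝ᵥ H j *ᵥ (x - M j)) := by
    refine .of_bound (2 / c) (.of_forall fun x ↦ ?_)
    rw [norm_of_nonneg (by positivity)]
    refine le_trans ?_ (mul_le_mul_of_nonneg_left (le_abs_self _) (by positivity))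
    calc ‖x - M j‖ ^ 2 = c⁻¹ * (c * ‖x - M j‖ ^ 2) := by field_simp
      _ ≤ c⁻¹ * ((x - M j) ⬝ᵥ H j *ᵥ (x - M j)) := by gcongr; exact hcH _
      _ = _ := by ring
  have h := ((hV.expansion j).trans_isBigO hquad).right_isBigO_add
  exact hquad.trans (by simpa only [sub_add_cancel] using h)

theorem exists_le_mul_norm_sub_sq (j : ι) :
    ∃ C, 0 ≤ C ∧ ∀ x ∈ redSimplex d, V x ≤ C * ‖x - M j‖ ^ 2 :=
  GibbsMixture.exists_le_mul_norm_sub_sq (isCompact_redSimplex d) hV.continuousOn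
    (hV.isBigO_norm_sub_sq j)

theorem exists_mul_norm_sub_sq_le [Finite ι] [Nonempty ι] :
    ∃ c > 0, ∀ x ∈ redSimplex d, ∃ j, c * ‖x - M j‖ ^ 2 ≤ V x :=
  GibbsMixture.exists_mul_norm_sub_sq_le (isCompact_redSimplex d) hV.continuousOn hV.pos
    (fun _ ↦ hV.nonneg) hV.norm_sub_sq_isBigO

theorem tendsto_mul (j : ι) (y : Fin d → ℝ) :
    Tendsto (fun i : ℕ × (Fin d → ℝ) ↦ i.1 * V (M j + (√i.1)⁻¹ • i.2)) (atTop ×ˢ 𝓝 y)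
      (𝓝 (1 / 2 * (y ⬝ᵥ H j *ᵥ y))) :=
  tendsto_mul_of_isLittleO_sub_half_quadratic (hV.expansion j)
    (tendsto_natCast_atTop_atTop.comp tendsto_fst) tendsto_snd

end IsNondegenerateGap

end Gap

section GaussianMixture

variable {d N : ℕ} {ι : Type*} [Fintype ι] {V : (Fin d → ℝ) → ℝ} {M : ι → Fin d → ℝ}
  {H S : ι → Matrix (Fin d) (Fin d) ℝ} {w : ι → ℝ} {δ : ℝ}

/-- The unnormalized mixture of product measures, with weight `w j` on the Gaussian mixture of
covariance `S j` around `M j`. -/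
noncomputable def gaussianMixture (w : ι → ℝ) (M : ι → Fin d → ℝ)
    (S : ι → Matrix (Fin d) (Fin d) ℝ) (δ : ℝ) (σ : Fin N → Fin (d + 1)) : ℝ :=
  ∑ j, w j * productMixture (gaussianMeasure (S j)) (truncatedParameter δ (M j) N) σ

/-- The density of `gaussianMixture w M S δ` with respect to `exp (-N * shannonEntropy)`, as a
function of the empirical distribution `m`. -/
noncomputable def gaussianMixtureDensity (w : ι → ℝ) (M : ι → Fin d → ℝ)
    (S : ι → Matrix (Fin d) (Fin d) ℝ) (δ : ℝ) (N : ℕ) (m : Fin (d + 1) → ℝ) : ℝ :=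
  ∑ j, w j * mixtureDensity (gaussianMeasure (S j)) (truncatedParameter δ (M j) N) N m

theorem eventually_gaussianMixture_eq (hδ : δ < 1 / 2) (hM : ∀ j k, 0 < full (M j) k) :
    ∀ᶠ N : ℕ in atTop, ∀ σ : Fin N → Fin (d + 1), gaussianMixture w M S δ σ =
      exp (-(N * shannonEntropy (empiricalDistribution σ))) *
        gaussianMixtureDensity w M S δ N (empiricalDistribution σ) := by
  filter_upwards [eventually_all.2 fun j ↦ eventually_truncatedParameter_pos hδ (hM j)] with N h σ
  rw [gaussianMixture, gaussianMixtureDensity, mul_sum]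
  refine sum_congr rfl fun j _ ↦ ?_
  rw [productMixture_eq_exp_mul_mixtureDensity (h j), mul_left_comm]

theorem eventually_sum_gaussianMixture (hδ : δ < 1 / 2) (hM : ∀ j k, 0 < full (M j) k)
    (hS : ∀ j, (S j).PosDef) : ∀ᶠ N : ℕ in atTop,
      ∑ σ : Fin N → Fin (d + 1), gaussianMixture w M S δ σ = ∑ j, w j := by
  filter_upwards [eventually_all.2 fun j ↦
    eventually_sum_productMixture_truncatedParameter hδ (hM j) (hS j)] with N h
  simp only [gaussianMixture]
  rw [Finset.sum_comm]
  simp only [← mul_sum, h, mul_one]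

theorem norm_sqrt_smul_full_sub_sq_le (x a : Fin d → ℝ) :
    ‖√N • (full x - full a)‖ ^ 2 ≤ (d + 1) ^ 2 * (N * ‖x - a‖ ^ 2) := by
  rw [full_sub_full, norm_smul, mul_pow, norm_of_nonneg (sqrt_nonneg _), sq_sqrt N.cast_nonneg,
    mul_left_comm, ← mul_pow]
  gcongr
  exact norm_tangent_le _

theorem eventually_gaussianMixtureDensity_le (hδ : δ < 1 / 2) (hM : ∀ j k, 0 < full (M j) k)
    (hw : ∀ j, 0 < w j) (hS : ∀ j, (S j).PosDef) : ∀ᶠ N : ℕ in atTop,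
      ∀ m ∈ stdSimplex ℝ (Fin (d + 1)), gaussianMixtureDensity w M S δ N m ≤ ∑ j, w j := by
  filter_upwards [eventually_all.2 fun j ↦ eventually_truncatedParameter_pos hδ (hM j)]
    with N h m hm
  refine sum_le_sum fun j _ ↦ mul_le_of_le_one_right (hw j).le ?_
  have := isProbabilityMeasure_gaussianMeasure (hS j)
  exact mixtureDensity_le_one (measurable_truncatedParameter _ _ _)
    (fun x ↦ truncatedParameter_mem_stdSimplex (h j x)) (h j) hm

theorem mul_mixtureDensity_le_gaussianMixtureDensity (hw : ∀ j, 0 ≤ w j) (j : ι)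
    (m : Fin (d + 1) → ℝ) :
    w j * mixtureDensity (gaussianMeasure (S j)) (truncatedParameter δ (M j) N) N m ≤
      gaussianMixtureDensity w M S δ N m :=
  single_le_sum (f := fun j ↦ w j * mixtureDensity (gaussianMeasure (S j))
      (truncatedParameter δ (M j) N) N m)
    (fun j _ ↦ mul_nonneg (hw j) (integral_nonneg fun _ ↦ (exp_pos _).le)) (mem_univ j)

theorem IsNondegenerateGap.exists_exp_le_gaussianMixtureDensity [Nonempty ι]
    (hV : IsNondegenerateGap V M H) (hδ : δ < 1 / 2) (hw : ∀ j, 0 < w j)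
    (hS : ∀ j, (S j).PosDef) : ∃ K, 0 ≤ K ∧ ∀ᶠ N : ℕ in atTop, ∀ x ∈ redSimplex d,
      exp (-(K * (1 + N * V x))) ≤ gaussianMixtureDensity w M S δ N (full x) := by
  obtain ⟨c, hc, hVc⟩ := hV.exists_mul_norm_sub_sq_le
  choose b hb C hC using fun j ↦
    exists_mul_exp_le_mixtureDensity_truncatedParameter hδ (hV.full_pos j) (hS j)
  set K : ι → ℝ := fun j ↦ |log (w j * b j)| + |C j| * ((d + 1) ^ 2 / c)
  have hK j : 0 ≤ K j := by positivity
  refine ⟨∑ j, K j, sum_nonneg fun j _ ↦ hK j, ?_⟩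
  filter_upwards [eventually_all.2 hC] with N hN x hx
  obtain ⟨j, hj⟩ := hVc x hx
  have hVx := hV.nonneg hx
  have hquad : C j * ‖√N • (full x - full (M j))‖ ^ 2 ≤ |C j| * ((d + 1) ^ 2 / c) * (N * V x) := by
    rw [mul_assoc]
    refine mul_le_mul (le_abs_self _) ((norm_sqrt_smul_full_sub_sq_le _ _).trans ?_)
      (by positivity) (abs_nonneg _)
    calc (d + 1) ^ 2 * (N * ‖x - M j‖ ^ 2)
        = (d + 1) ^ 2 / c * (N * (c * ‖x - M j‖ ^ 2)) := by field_simp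
      _ ≤ (d + 1) ^ 2 / c * (N * V x) := by gcongr
  have hlog := neg_abs_le (log (w j * b j))
  calc exp (-((∑ j, K j) * (1 + N * V x))) ≤ exp (-(K j * (1 + N * V x))) := by
        gcongr
        exact single_le_sum (fun j _ ↦ hK j) (mem_univ j)
    _ ≤ exp (log (w j * b j) + -C j * ‖√N • (full x - full (M j))‖ ^ 2) := by
        have : 0 ≤ N * V x := by positivity
        have : 0 ≤ |log (w j * b j)| * (N * V x) := by positivity
        have : 0 ≤ |C j| * ((d + 1) ^ 2 / c) := by positivity
        refine exp_le_exp.2 ?_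
        simp only [K]
        linarith
    _ = w j * (b j * exp (-C j * ‖√N • (full x - full (M j))‖ ^ 2)) := by
        rw [exp_add, exp_log (mul_pos (hw j) (hb j)), mul_assoc]
    _ ≤ w j * mixtureDensity (gaussianMeasure (S j)) (truncatedParameter δ (M j) N) N (full x) :=
        mul_le_mul_of_nonneg_left (hN j _ (full_mem_stdSimplex_iff.2 hx)) (hw j).le
    _ ≤ gaussianMixtureDensity w M S δ N (full x) :=
        mul_mixtureDensity_le_gaussianMixtureDensity (fun j ↦ (hw j).le) j _

theorem IsNondegenerateGap.exists_abs_log_gaussianMixtureDensity_le [Nonempty ι]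
    (hV : IsNondegenerateGap V M H) (hδ : δ < 1 / 2) (hw : ∀ j, 0 < w j)
    (hS : ∀ j, (S j).PosDef) : ∃ C, 0 ≤ C ∧ ∀ᶠ N : ℕ in atTop, ∀ x ∈ redSimplex d,
      0 < gaussianMixtureDensity w M S δ N (full x) ∧
      |N * V x + log (gaussianMixtureDensity w M S δ N (full x))| ≤ C * (1 + N * V x) := by
  obtain ⟨K, hK, hlower⟩ := hV.exists_exp_le_gaussianMixtureDensity hδ hw hS
  refine ⟨1 + K + |log (∑ j, w j)|, by positivity, ?_⟩
  filter_upwards [hlower, eventually_gaussianMixtureDensity_le hδ hV.full_pos hw hS]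
    with N hlo hup x hx
  have hpos := (exp_pos _).trans_le (hlo x hx)
  have hlogK := (le_log_iff_exp_le hpos).2 (hlo x hx)
  have hlogw := log_le_log hpos (hup _ (full_mem_stdSimplex_iff.2 hx))
  have hNV : 0 ≤ N * V x := mul_nonneg N.cast_nonneg (hV.nonneg hx)
  have hwNV : 0 ≤ |log (∑ j, w j)| * (N * V x) := by positivity
  have hKNV : 0 ≤ K * (N * V x) := by positivity
  refine ⟨hpos, abs_le.2 ⟨?_, ?_⟩⟩ <;>
    linarith [le_abs_self (log (∑ j, w j)), abs_nonneg (log (∑ j, w j))]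

theorem IsNondegenerateGap.tendsto_gaussianMixtureDensity
    (hV : IsNondegenerateGap V M H) (hM : Function.Injective M) (hδ₀ : 0 < δ) (hδ : δ < 1 / 2)
    (hw : ∀ j, w j = (√((H j).det * ∏ k, full (M j) k))⁻¹) (hS : ∀ j, (S j).PosDef)
    (hSH : ∀ j, categoricalCov (M j) + S j = (H j)⁻¹) (j : ι) (y : Fin d → ℝ) :
    Tendsto (fun i : ℕ × (Fin d → ℝ) ↦
        gaussianMixtureDensity w M S δ i.1 (full (M j + (√i.1)⁻¹ • i.2))) (atTop ×ˢ 𝓝 y)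
      (𝓝 (exp (-(1 / 2) * (y ⬝ᵥ H j *ᵥ y)))) := by
  classical
  have hHdet := (hV.posDef j).det_pos
  have hprod : 0 < ∏ k, full (M j) k := prod_pos fun k _ ↦ hV.full_pos j k
  have hmain := tendsto_mixtureDensity_truncatedParameter hδ₀ hδ (hV.full_pos j) (hS j) y
  rw [hSH, nonsing_inv_nonsing_inv _ hHdet.ne'.isUnit, det_nonsing_inv,
    det_categoricalCov_eq_prod_full, Ring.inverse_eq_inv', div_inv_eq_mul] at hmain
  have hlimit : exp (-(1 / 2) * (y ⬝ᵥ H j *ᵥ y)) = ∑ l, w l * if l = j then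
      √((∏ k, full (M j) k) * (H j).det) * exp (-(1 / 2) * (y ⬝ᵥ H j *ᵥ y)) else 0 := by
    simp only [mul_ite, mul_zero, Finset.sum_ite_eq', mem_univ, if_true]
    rw [hw, mul_comm (H j).det, inv_mul_cancel_left₀ (by positivity)]
  rw [hlimit]
  refine tendsto_finsetSum _ fun l _ ↦ .const_mul (w l) ?_
  split_ifs with hl
  · subst hl
    exact hmain
  · exact tendsto_mixtureDensity_truncatedParameter_zero hδ₀ hδ (hV.full_pos l) (hV.full_pos j)
      (hM.ne hl) (hS l) y

theorem IsNondegenerateGap.eventually_abs_log_gaussianMixtureDensity_le [Nonempty ι]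
    (hV : IsNondegenerateGap V M H) (hM : Function.Injective M) (hδ₀ : 0 < δ) (hδ : δ < 1 / 2)
    (hw : ∀ j, w j = (√((H j).det * ∏ k, full (M j) k))⁻¹) (hS : ∀ j, (S j).PosDef)
    (hSH : ∀ j, categoricalCov (M j) + S j = (H j)⁻¹) (R : ℝ) {ε : ℝ} (hε : 0 < ε) :
    ∀ᶠ N : ℕ in atTop, ∀ x ∈ redSimplex d, N * V x ≤ R →
      |N * V x + log (gaussianMixtureDensity w M S δ N (full x))| ≤ ε := by
  obtain ⟨c, hc, hVc⟩ := hV.exists_mul_norm_sub_sq_le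
  have hlim (j : ι) (y : Fin d → ℝ) : ∀ᶠ i : ℕ × (Fin d → ℝ) in atTop ×ˢ 𝓝 y,
      |i.1 * V (M j + (√i.1)⁻¹ • i.2) +
        log (gaussianMixtureDensity w M S δ i.1 (full (M j + (√i.1)⁻¹ • i.2)))| ≤ ε := by
    have h := (hV.tendsto_mul j y).add
      ((hV.tendsto_gaussianMixtureDensity hM hδ₀ hδ hw hS hSH j y).log (exp_pos _).ne')
    rw [log_exp, ← add_mul, add_neg_cancel, zero_mul] at h
    exact (by simpa using h.abs : Tendsto _ _ (𝓝 (0 : ℝ))).eventually_le_const hε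
  have huniform (j : ι) : ∀ᶠ N : ℕ in atTop, ∀ y ∈ Metric.closedBall (0 : Fin d → ℝ) √(R / c),
      |N * V (M j + (√N)⁻¹ • y) +
        log (gaussianMixtureDensity w M S δ N (full (M j + (√N)⁻¹ • y)))| ≤ ε :=
    eventually_prod_principal_iff.1 <| prod_mono_right _ principal_le_nhdsSet <|
      (isCompact_closedBall _ _).mem_prod_nhdsSet_of_forall fun y _ ↦ hlim j y
  filter_upwards [eventually_all.2 huniform, eventually_ne_atTop 0] with N hN hN0 x hx hR
  obtain ⟨j, hj⟩ := hVc x hx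
  have hmem : √N • (x - M j) ∈ Metric.closedBall 0 √(R / c) := by
    rw [mem_closedBall_zero_iff]
    refine le_sqrt_of_sq_le ?_
    rw [norm_smul, mul_pow, norm_of_nonneg (sqrt_nonneg _), sq_sqrt N.cast_nonneg, le_div_iff₀ hc]
    calc N * ‖x - M j‖ ^ 2 * c = N * (c * ‖x - M j‖ ^ 2) := by ring
      _ ≤ N * V x := by gcongr
      _ ≤ R := hR
  have h := hN j _ hmem
  rwa [smul_smul, inv_mul_cancel₀ (by positivity), one_smul, add_sub_cancel] at h

end GaussianMixture

section GibbsWeight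

variable {d N : ℕ} {ι : Type*} {V : (Fin d → ℝ) → ℝ} {M : ι → Fin d → ℝ}
  {H S : ι → Matrix (Fin d) (Fin d) ℝ} {w : ι → ℝ} {δ : ℝ}

/-- The Gibbs weight `exp (N * F)` for `F = -shannonEntropy - V`, that is, when `-V` is the free
energy functional `F + shannonEntropy`, in the first `d` coordinates. -/
noncomputable def gibbsWeight (V : (Fin d → ℝ) → ℝ) (σ : Fin N → Fin (d + 1)) : ℝ :=
  exp (-(N * shannonEntropy (empiricalDistribution σ))) *
    exp (-(N * V (Fin.init (empiricalDistribution σ))))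

theorem gibbsWeight_pos (V : (Fin d → ℝ) → ℝ) (σ : Fin N → Fin (d + 1)) : 0 < gibbsWeight V σ :=
  mul_pos (exp_pos _) (exp_pos _)

theorem init_empiricalDistribution_mem_redSimplex (hN : N ≠ 0) (σ : Fin N → Fin (d + 1)) :
    Fin.init (empiricalDistribution σ) ∈ redSimplex d := by
  have hσ := empiricalDistribution_mem_stdSimplex hN σ
  rwa [← full_mem_stdSimplex_iff, full_init hσ.2]

theorem norm_init_sub_le (m : Fin (d + 1) → ℝ) (a : Fin d → ℝ) :
    ‖Fin.init m - a‖ ≤ ‖m - full a‖ := by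
  refine (pi_norm_le_iff_of_nonneg (norm_nonneg _)).2 fun k ↦ ?_
  simpa [Fin.init] using norm_le_pi_norm (m - full a) k.castSucc

theorem one_add_sq_le_two_add_mul_norm_pow_four {C : ℝ} (hC : 0 ≤ C) {m : Fin (d + 1) → ℝ}
    {a : Fin d → ℝ} (hV₀ : 0 ≤ V (Fin.init m))
    (hVC : V (Fin.init m) ≤ C * ‖Fin.init m - a‖ ^ 2) :
    (1 + N * V (Fin.init m)) ^ 2 ≤ 2 + 2 * C ^ 2 * ‖√N • (m - full a)‖ ^ 4 := by
  have hNV : N * V (Fin.init m) ≤ C * ‖√N • (m - full a)‖ ^ 2 := by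
    rw [norm_smul, mul_pow, norm_of_nonneg (sqrt_nonneg _), sq_sqrt N.cast_nonneg, mul_left_comm]
    gcongr
    exact hVC.trans (by gcongr; exact norm_init_sub_le m a)
  calc (1 + N * V (Fin.init m)) ^ 2 ≤ 2 * (1 ^ 2 + (N * V (Fin.init m)) ^ 2) := add_sq_le
    _ ≤ 2 * (1 ^ 2 + (C * ‖√N • (m - full a)‖ ^ 2) ^ 2) := by gcongr
    _ = _ := by ring

theorem IsNondegenerateGap.exists_sum_productMixture_mul_sq_le (hV : IsNondegenerateGap V M H)
    (hδ : δ < 1 / 2) (j : ι) (hS : (S j).PosDef) :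
    ∃ B, ∀ᶠ N : ℕ in atTop, ∑ σ : Fin N → Fin (d + 1),
      productMixture (gaussianMeasure (S j)) (truncatedParameter δ (M j) N) σ *
        (1 + N * V (Fin.init (empiricalDistribution σ))) ^ 2 ≤ B := by
  obtain ⟨C, hC, hVC⟩ := hV.exists_le_mul_norm_sub_sq j
  obtain ⟨B, hB⟩ := exists_sum_productMixture_truncatedParameter_mul_norm_pow_four_le hδ
    (hV.full_pos j) hS
  refine ⟨2 + 2 * C ^ 2 * B, ?_⟩
  filter_upwards [hB, eventually_truncatedParameter_pos hδ (hV.full_pos j),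
    eventually_sum_productMixture_truncatedParameter hδ (hV.full_pos j) hS,
    eventually_ne_atTop 0] with N hBN hpos hsum hN
  calc _ ≤ ∑ σ : Fin N → Fin (d + 1),
        productMixture (gaussianMeasure (S j)) (truncatedParameter δ (M j) N) σ *
          (2 + 2 * C ^ 2 * ‖√N • (empiricalDistribution σ - full (M j))‖ ^ 4) := by
        refine sum_le_sum fun σ _ ↦ mul_le_mul_of_nonneg_left ?_
          (integral_nonneg fun x ↦ prod_nonneg fun i _ ↦ (hpos x (σ i)).le)
        have hσ := init_empiricalDistribution_mem_redSimplex hN σ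
        exact one_add_sq_le_two_add_mul_norm_pow_four hC (hV.nonneg hσ) (hVC _ hσ)
    _ ≤ 2 + 2 * C ^ 2 * B := by
        simp only [mul_add, sum_add_distrib, ← sum_mul, hsum, one_mul, mul_left_comm _ (2 * C ^ 2),
          ← mul_sum]
        gcongr

theorem IsNondegenerateGap.exists_sum_gaussianMixture_mul_sq_le_mul_sum [Fintype ι] [Nonempty ι]
    (hV : IsNondegenerateGap V M H) (hδ : δ < 1 / 2) (hw : ∀ j, 0 < w j)
    (hS : ∀ j, (S j).PosDef) : ∃ B, ∀ᶠ N : ℕ in atTop,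
      ∑ σ : Fin N → Fin (d + 1), gaussianMixture w M S δ σ *
        (1 + N * V (Fin.init (empiricalDistribution σ))) ^ 2 ≤
      B * ∑ σ : Fin N → Fin (d + 1), gaussianMixture w M S δ σ := by
  choose B hB using fun j ↦ hV.exists_sum_productMixture_mul_sq_le hδ j (hS j)
  have hwsum : 0 < ∑ j, w j := sum_pos (fun j _ ↦ hw j) univ_nonempty
  refine ⟨(∑ j, w j * B j) / ∑ j, w j, ?_⟩
  filter_upwards [eventually_all.2 hB, eventually_sum_gaussianMixture hδ hV.full_pos hS]
    with N hBN hsum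
  rw [hsum, div_mul_cancel₀ _ hwsum.ne']
  simp only [gaussianMixture, sum_mul]
  rw [Finset.sum_comm]
  simp only [mul_assoc, ← mul_sum]
  exact sum_le_sum fun j _ ↦ mul_le_mul_of_nonneg_left (hBN j) (hw j).le

theorem sq_one_add_mul_exp_neg_le {t : ℝ} (ht : 0 ≤ t) :
    (1 + t) ^ 2 * exp (-t) ≤ 16 * exp (-(t / 2)) := by
  have hexp : 1 + t ≤ 4 * exp (t / 4) := by linarith [add_one_le_exp (t / 4)]
  calc (1 + t) ^ 2 * exp (-t) ≤ (4 * exp (t / 4)) ^ 2 * exp (-t) := by gcongr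
    _ = 16 * exp (-(t / 2)) := by
        rw [mul_pow, ← exp_nat_mul, mul_assoc, ← exp_add]
        ring_nf

theorem IsNondegenerateGap.exists_sum_gibbsWeight_mul_sq_le [Finite ι] [Nonempty ι]
    (hV : IsNondegenerateGap V M H) : ∃ B, ∀ N : ℕ, N ≠ 0 → ∑ σ : Fin N → Fin (d + 1),
      gibbsWeight V σ * (1 + N * V (Fin.init (empiricalDistribution σ))) ^ 2 ≤ B := by
  cases nonempty_fintype ι
  obtain ⟨c, hc, hVc⟩ := hV.exists_mul_norm_sub_sq_le
  choose B hB using fun j ↦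
    exists_sum_exp_neg_shannonEntropy_mul_exp_le (hV.full_pos j) (half_pos hc)
  refine ⟨16 * ∑ j, B j, fun N hN ↦ ?_⟩
  set g : ι → (Fin N → Fin (d + 1)) → ℝ := fun j σ ↦
    exp (-(c / 2) * ‖√N • (Fin.init (empiricalDistribution σ) - M j)‖ ^ 2) with hg
  have hterm (σ : Fin N → Fin (d + 1)) :
      gibbsWeight V σ * (1 + N * V (Fin.init (empiricalDistribution σ))) ^ 2 ≤
        16 * ∑ j, exp (-(N * shannonEntropy (empiricalDistribution σ))) * g j σ := by
    have hσ := init_empiricalDistribution_mem_redSimplex hN σ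
    obtain ⟨j, hj⟩ := hVc _ hσ
    have hquad : exp (-(N * V (Fin.init (empiricalDistribution σ)) / 2)) ≤ g j σ := by
      rw [hg, exp_le_exp, norm_smul, mul_pow, norm_of_nonneg (sqrt_nonneg _),
        sq_sqrt N.cast_nonneg]
      linarith [mul_le_mul_of_nonneg_left hj (N.cast_nonneg (α := ℝ))]
    rw [gibbsWeight, mul_assoc, ← mul_sum, mul_left_comm 16]
    refine mul_le_mul_of_nonneg_left ?_ (exp_pos _).le
    rw [mul_comm]
    refine (sq_one_add_mul_exp_neg_le (mul_nonneg N.cast_nonneg (hV.nonneg hσ))).trans ?_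
    gcongr
    exact hquad.trans
      (single_le_sum (f := fun j ↦ g j σ) (fun j _ ↦ (exp_pos _).le) (mem_univ j))
  calc _ ≤ ∑ σ, 16 * ∑ j, exp (-(N * shannonEntropy (empiricalDistribution σ))) * g j σ :=
        sum_le_sum fun σ _ ↦ hterm σ
    _ ≤ 16 * ∑ j, B j := by
        rw [← mul_sum, Finset.sum_comm]
        gcongr with j
        exact hB j N hN

theorem IsNondegenerateGap.exists_le_sum_gibbsWeight [Nonempty ι]
    (hV : IsNondegenerateGap V M H) (hδ : δ < 1 / 2) (hS : ∀ j, (S j).PosDef) :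
    ∃ b > 0, ∀ᶠ N : ℕ in atTop, b ≤ ∑ σ : Fin N → Fin (d + 1), gibbsWeight V σ := by
  obtain ⟨j⟩ := ‹Nonempty ι›
  obtain ⟨B, hB⟩ := hV.exists_sum_productMixture_mul_sq_le hδ j (hS j)
  have := isProbabilityMeasure_gaussianMeasure (hS j)
  refine ⟨exp (-B), exp_pos _, ?_⟩
  filter_upwards [hB, eventually_truncatedParameter_pos hδ (hV.full_pos j),
    eventually_sum_productMixture_truncatedParameter hδ (hV.full_pos j) (hS j),
    eventually_ne_atTop 0] with N hBN hpos hsum hN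
  set f : (Fin N → Fin (d + 1)) → ℝ :=
    productMixture (gaussianMeasure (S j)) (truncatedParameter δ (M j) N)
  set v : (Fin N → Fin (d + 1)) → ℝ := fun σ ↦ N * V (Fin.init (empiricalDistribution σ))
  have hf σ : 0 ≤ f σ := integral_nonneg fun x ↦ prod_nonneg fun i _ ↦ (hpos x (σ i)).le
  calc exp (-B) ≤ exp (∑ σ, f σ • -v σ) := by
        refine exp_le_exp.2 ?_
        simp only [smul_eq_mul, mul_neg, sum_neg_distrib]
        refine neg_le_neg (le_trans (sum_le_sum fun σ _ ↦ ?_) hBN)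
        exact mul_le_mul_of_nonneg_left (by nlinarith [sq_nonneg (v σ)]) (hf σ)
    _ ≤ ∑ σ, f σ • exp (-v σ) :=
        convexOn_exp.map_sum_le (fun σ _ ↦ hf σ) hsum fun σ _ ↦ Set.mem_univ _
    _ ≤ ∑ σ, gibbsWeight V σ := by
        refine sum_le_sum fun σ _ ↦ mul_le_mul_of_nonneg_right ?_ (exp_pos _).le
        exact (productMixture_eq_exp_mul_mixtureDensity hpos σ).trans_le <|
          mul_le_of_le_one_right (exp_pos _).le <|
            mixtureDensity_le_one (measurable_truncatedParameter _ _ _)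
              (fun x ↦ truncatedParameter_mem_stdSimplex (hpos x)) hpos
              (empiricalDistribution_mem_stdSimplex hN σ)

theorem IsNondegenerateGap.exists_sum_gibbsWeight_mul_sq_le_mul_sum [Finite ι] [Nonempty ι]
    (hV : IsNondegenerateGap V M H) (hδ : δ < 1 / 2) (hS : ∀ j, (S j).PosDef) :
    ∃ B, ∀ᶠ N : ℕ in atTop, ∑ σ : Fin N → Fin (d + 1),
        gibbsWeight V σ * (1 + N * V (Fin.init (empiricalDistribution σ))) ^ 2 ≤
      B * ∑ σ : Fin N → Fin (d + 1), gibbsWeight V σ := by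
  obtain ⟨b, hb, hlower⟩ := hV.exists_le_sum_gibbsWeight hδ hS
  obtain ⟨B, hB⟩ := hV.exists_sum_gibbsWeight_mul_sq_le
  refine ⟨|B| / b, ?_⟩
  filter_upwards [hlower, eventually_ne_atTop 0] with N hbN hN
  calc _ ≤ |B| / b * b := by
        rw [div_mul_cancel₀ _ hb.ne']
        exact (hB N hN).trans (le_abs_self B)
    _ ≤ _ := by gcongr

theorem IsNondegenerateGap.eventually_abs_log_gibbsWeight_div_eq [Fintype ι] [Nonempty ι]
    (hV : IsNondegenerateGap V M H) (hδ : δ < 1 / 2) (hw : ∀ j, 0 < w j)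
    (hS : ∀ j, (S j).PosDef) :
    ∀ᶠ N : ℕ in atTop, ∀ σ : Fin N → Fin (d + 1), 0 < gaussianMixture w M S δ σ ∧
      |log (gibbsWeight V σ / gaussianMixture w M S δ σ)| =
        |N * V (Fin.init (empiricalDistribution σ)) +
          log (gaussianMixtureDensity w M S δ N (full (Fin.init (empiricalDistribution σ))))| := by
  obtain ⟨C, -, hlog⟩ := hV.exists_abs_log_gaussianMixtureDensity_le hδ hw hS
  filter_upwards [hlog, eventually_gaussianMixture_eq hδ hV.full_pos, eventually_ne_atTop 0]
    with N hD hg hN σ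
  have hpos := (hD _ (init_empiricalDistribution_mem_redSimplex hN σ)).1
  rw [full_init (empiricalDistribution_mem_stdSimplex hN σ).2] at hpos ⊢
  rw [hg, gibbsWeight, mul_div_mul_left _ _ (exp_pos _).ne', log_div (exp_pos _).ne' hpos.ne',
    log_exp, ← abs_neg, neg_sub, sub_neg_eq_add]
  exact ⟨by positivity, congrArg abs (add_comm _ _)⟩

theorem IsNondegenerateGap.tendsto_relEnt [Fintype ι] [Nonempty ι]
    (hV : IsNondegenerateGap V M H) (hM : Function.Injective M) (hδ₀ : 0 < δ) (hδ : δ < 1 / 2)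
    (hw : ∀ j, w j = (√((H j).det * ∏ k, full (M j) k))⁻¹) (hS : ∀ j, (S j).PosDef)
    (hSH : ∀ j, categoricalCov (M j) + S j = (H j)⁻¹) :
    Tendsto (fun N : ℕ ↦ relEnt (normalize (gibbsWeight (N := N) V))
        (normalize (gaussianMixture (N := N) w M S δ))) atTop (𝓝 0) ∧
      Tendsto (fun N : ℕ ↦ relEnt (normalize (gaussianMixture (N := N) w M S δ))
        (normalize (gibbsWeight (N := N) V))) atTop (𝓝 0) := by
  have hw₀ j : 0 < w j := by
    rw [hw]
    have hdet := (hV.posDef j).det_pos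
    have hprod : 0 < ∏ k, full (M j) k := prod_pos fun k _ ↦ hV.full_pos j k
    positivity
  obtain ⟨C, hC, hlog⟩ := hV.exists_abs_log_gaussianMixtureDensity_le hδ hw₀ hS
  obtain ⟨B, hB⟩ := hV.exists_sum_gibbsWeight_mul_sq_le_mul_sum hδ hS
  obtain ⟨B', hB'⟩ := hV.exists_sum_gaussianMixture_mul_sq_le_mul_sum hδ hw₀ hS
  have hratio := hV.eventually_abs_log_gibbsWeight_div_eq hδ hw₀ hS
  refine tendsto_relEnt_normalize (C := C) (B := max B B')
    (W := fun N σ ↦ 1 + N * V (Fin.init (empiricalDistribution σ)))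
    (.of_forall fun _ ↦ gibbsWeight_pos V) (hratio.mono fun N h σ ↦ (h σ).1) hC ?_
    (fun R ε hε ↦ ?_) ?_ ?_
  · filter_upwards [hratio, hlog, eventually_ne_atTop 0] with N hN hlogN hN0 σ
    rw [(hN σ).2]
    exact (hlogN _ (init_empiricalDistribution_mem_redSimplex hN0 σ)).2
  · filter_upwards [hratio, eventually_ne_atTop 0,
      hV.eventually_abs_log_gaussianMixtureDensity_le hM hδ₀ hδ hw hS hSH R hε]
      with N hN hN0 hsmall σ hσ
    rw [(hN σ).2]
    exact hsmall _ (init_empiricalDistribution_mem_redSimplex hN0 σ) (by linarith)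
  · filter_upwards [hB] with N hBN
    exact hBN.trans
      (by gcongr; exacts [sum_nonneg fun σ _ ↦ (gibbsWeight_pos V σ).le, le_max_left _ _])
  · filter_upwards [hB', hratio] with N hBN hN
    exact hBN.trans (by gcongr; exacts [sum_nonneg fun σ _ ↦ (hN σ).1.le, le_max_right _ _])

end GibbsWeight

section FreeEnergy

theorem continuous_shannonEntropy {κ : Type*} [Fintype κ] :
    Continuous (shannonEntropy : (κ → ℝ) → ℝ) :=
  continuous_finsetSum _ fun k _ ↦ continuous_negMulLog.comp (continuous_apply k)

theorem contDiffAt_shannonEntropy {κ : Type*} [Fintype κ] {n : WithTop ℕ∞} {m : κ → ℝ}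
    (hm : ∀ k, m k ≠ 0) : ContDiffAt ℝ n shannonEntropy m := by
  refine ContDiffAt.sum fun k _ ↦ ?_
  have hproj : ContDiffAt ℝ n (fun m : κ → ℝ ↦ m k) m := (contDiff_apply ℝ ℝ k).contDiffAt
  exact hproj.neg.mul (hproj.log (hm k))

variable {d N : ℕ} {F : (Fin (d + 1) → ℝ) → ℝ} {ι : Type*} {M : ι → Fin d → ℝ}
  {H S : ι → Matrix (Fin d) (Fin d) ℝ} {w : ι → ℝ} {δ c : ℝ}

theorem contDiffAt_comp_full {n : WithTop ℕ∞} (hF : ContDiffOn ℝ n F (stdSimplex ℝ (Fin (d + 1))))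
    {x : Fin d → ℝ} (hx : x ∈ interior (redSimplex d)) :
    ContDiffAt ℝ n (fun x ↦ F (full x)) x :=
  (hF.comp contDiff_full.contDiffOn fun _ ↦ full_mem_stdSimplex_iff.2).contDiffAt
    (mem_interior_iff_mem_nhds.1 hx)

/-- The free energy functional, the sum of the energy `F` and the entropy, in the first `d`
coordinates of the simplex. -/
noncomputable def freeEnergy (F : (Fin (d + 1) → ℝ) → ℝ) (x : Fin d → ℝ) : ℝ :=
  F (full x) + shannonEntropy (full x)

theorem isNondegenerateGap_sub_freeEnergy (hF : ContinuousOn F (stdSimplex ℝ (Fin (d + 1))))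
    (hF₂ : ∀ j, ContDiffAt ℝ 2 (fun x ↦ F (full x)) (M j))
    (hMint : ∀ j, M j ∈ interior (redSimplex d))
    (hle : ∀ x ∈ redSimplex d, freeEnergy F x ≤ c)
    (heq : ∀ x ∈ redSimplex d, freeEnergy F x = c ↔ x ∈ Set.range M)
    (hH : ∀ j k l, H j k l =
      -(fderiv ℝ (fun x ↦ fderiv ℝ (freeEnergy F) x (Pi.single l 1)) (M j)) (Pi.single k 1))
    (hHpd : ∀ j, (H j).PosDef) :
    IsNondegenerateGap (fun x ↦ c - freeEnergy F x) M H where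
  mem_interior := hMint
  continuousOn := continuousOn_const.sub <|
    (hF.comp continuous_full.continuousOn fun _ ↦ full_mem_stdSimplex_iff.2).add
      (continuous_shannonEntropy.comp continuous_full).continuousOn
  pos x hx hxM := sub_pos.2 <| (hle x hx).lt_of_ne fun h ↦ hxM ((heq x hx).1 h)
  posDef := hHpd
  expansion j := by
    have hmax : freeEnergy F (M j) = c := (heq _ (interior_subset (hMint j))).2 ⟨j, rfl⟩
    rw [← hmax]
    refine isLittleO_sub_half_hessian_of_isLocalMax ((hF₂ j).add ?_) ?_ (hH j)
    · exact (contDiffAt_shannonEntropy fun k ↦ (full_pos_of_mem_interior (hMint j) k).ne').comp _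
        contDiff_full.contDiffAt
    · filter_upwards [mem_interior_iff_mem_nhds.1 (hMint j)] with x hx
      exact (hle x hx).trans_eq hmax.symm

theorem exp_mul_eq_mul_gibbsWeight (hN : N ≠ 0) (F : (Fin (d + 1) → ℝ) → ℝ) (c : ℝ)
    (σ : Fin N → Fin (d + 1)) : exp (N * F (empiricalDistribution σ)) =
      exp (N * c) * gibbsWeight (fun x ↦ c - freeEnergy F x) σ := by
  rw [gibbsWeight, freeEnergy, full_init (empiricalDistribution_mem_stdSimplex hN σ).2, ← exp_add,
    ← exp_add]
  ring_nf

theorem normalize_exp_mul_eq_normalize_gibbsWeight (hN : N ≠ 0) (F : (Fin (d + 1) → ℝ) → ℝ)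
    (c : ℝ) : normalize (fun σ : Fin N → Fin (d + 1) ↦ exp (N * F (empiricalDistribution σ))) =
      normalize (gibbsWeight fun x ↦ c - freeEnergy F x) := by
  ext σ
  simp only [normalize, exp_mul_eq_mul_gibbsWeight hN F c, ← mul_sum]
  exact mul_div_mul_left _ _ (exp_pos _).ne'

theorem gaussianDensity_eq_sum (S : Matrix (Fin d) (Fin d) ℝ) (x : Fin d → ℝ) :
    gaussianDensity S x =
      exp (-(1 / 2) * ∑ k, ∑ l, x k * S⁻¹ k l * x l) / √((2 * π) ^ d * S.det) := by
  simp only [gaussianDensity, dotProduct, mulVec, mul_sum, mul_assoc, Fintype.card_fin]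

theorem productMixture_truncatedParameter_eq_integral (S : Matrix (Fin d) (Fin d) ℝ)
    (a : Fin d → ℝ) (σ : Fin N → Fin (d + 1)) :
    productMixture (gaussianMeasure S) (truncatedParameter δ a N) σ =
      ∫ x, (∏ i, ∑ k, (full a k + tangent (truncate ((N : ℝ) ^ δ) x) k / √N) *
        (if σ i = k then (1 : ℝ) else 0)) * gaussianDensity S x := by
  simp only [productMixture, integral_gaussianMeasure, mul_ite, mul_one, mul_zero,
    Finset.sum_ite_eq, Finset.mem_univ, if_true, truncatedParameter, full_add, tangent_smul,
    Pi.add_apply, Pi.smul_apply, smul_eq_mul, inv_mul_eq_div]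

theorem tendsto_relEnt_gibbs_gaussianMixture [Fintype ι] [Nonempty ι]
    (hV : IsNondegenerateGap (fun x ↦ c - freeEnergy F x) M H) (hM : Function.Injective M)
    (hδ₀ : 0 < δ) (hδ : δ < 1 / 2) (hw : ∀ j, w j = (√((H j).det * ∏ k, full (M j) k))⁻¹)
    (hS : ∀ j, (S j).PosDef) (hSH : ∀ j, categoricalCov (M j) + S j = (H j)⁻¹)
    {ρ θ : ∀ N : ℕ, (Fin N → Fin (d + 1)) → ℝ}
    (hρ : ∀ N, ρ N = normalize fun σ ↦ exp (N * F (empiricalDistribution σ)))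
    (hθ : ∀ N σ, θ N σ = (∑ j, w j)⁻¹ * gaussianMixture w M S δ σ) :
    Tendsto (fun N ↦ relEnt (ρ N) (θ N)) atTop (𝓝 0) ∧
      Tendsto (fun N ↦ relEnt (θ N) (ρ N)) atTop (𝓝 0) := by
  have hlim := hV.tendsto_relEnt hM hδ₀ hδ hw hS hSH
  have heq : ∀ᶠ N : ℕ in atTop, normalize (gibbsWeight fun x ↦ c - freeEnergy F x) = ρ N ∧
      normalize (gaussianMixture w M S δ) = θ N := by
    filter_upwards [eventually_ne_atTop 0, eventually_sum_gaussianMixture hδ hV.full_pos hS]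
      with N hN hsum
    refine ⟨by rw [hρ, normalize_exp_mul_eq_normalize_gibbsWeight hN F c], ?_⟩
    ext σ
    rw [hθ, normalize, hsum, inv_mul_eq_div]
  exact ⟨hlim.1.congr' (heq.mono fun N h ↦ by rw [h.1, h.2]),
    hlim.2.congr' (heq.mono fun N h ↦ by rw [h.1, h.2])⟩

end FreeEnergy

end GibbsMixture

open GibbsMixture

theorem stmt_1_general {ι : Type*} [Fintype ι] [Nonempty ι] (d : ℕ)
    (F : (Fin (d + 1) → ℝ) → ℝ)
    (hF : ContinuousOn F {m : Fin (d + 1) → ℝ | (∀ k, 0 ≤ m k) ∧ ∑ k, m k = 1})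
    (ent : (Fin (d + 1) → ℝ) → ℝ)
    (hent : ∀ m, ent m = -∑ k, m k * Real.log (m k))
    (G : (Fin d → ℝ) → ℝ)
    (hG : ∀ x : Fin d → ℝ,
      G x = F (Fin.snoc x (1 - ∑ k, x k)) + ent (Fin.snoc x (1 - ∑ k, x k)))
    (Δhat : Set (Fin d → ℝ))
    (hΔhat : Δhat = {x : Fin d → ℝ | (∀ k, 0 ≤ x k) ∧ ∑ k, x k ≤ 1})
    (M : ι → Fin d → ℝ)
    (hMinj : Function.Injective M)
    (hMint : ∀ j, M j ∈ interior Δhat)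
    (hF₂ : ∀ j, ContDiffAt ℝ 2 (fun x => F (Fin.snoc x (1 - ∑ k, x k))) (M j))
    (hMmax : ∀ j, ∀ x ∈ Δhat, G x ≤ G (M j))
    (hMonly : ∀ x ∈ Δhat, (∀ y ∈ Δhat, G y ≤ G x) → ∃ j, x = M j)
    (H : ι → Matrix (Fin d) (Fin d) ℝ)
    (hH : ∀ j k l, H j k l =
      -(fderiv ℝ (fun x => fderiv ℝ G x (Pi.single l 1)) (M j)) (Pi.single k 1))
    (hHpd : ∀ j, (H j).PosDef)
    (Mfull : ι → Fin (d + 1) → ℝ)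
    (hMfull : ∀ j, Mfull j = Fin.snoc (M j) (1 - ∑ k, M j k))
    (w : ι → ℝ)
    (hw : ∀ j, w j = (Real.sqrt ((H j).det * ∏ k, Mfull j k))⁻¹)
    (Z : ℕ → ℝ)
    (hZ : ∀ N : ℕ, Z N = ∑ σ : Fin N → Fin (d + 1),
      Real.exp ((N : ℝ) * F (fun k => ((Finset.univ.filter fun i => σ i = k).card : ℝ) / N)))
    (μ : ∀ N : ℕ, (Fin N → Fin (d + 1)) → ℝ)
    (hμ : ∀ N σ, μ N σ =
      Real.exp ((N : ℝ) * F (fun k => ((Finset.univ.filter fun i => σ i = k).card : ℝ) / N)) / Z N)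
    (Smat : ι → Matrix (Fin d) (Fin d) ℝ)
    (hS : ∀ j, Smat j = (H j)⁻¹ - Matrix.diagonal (M j) + Matrix.of fun k l => M j k * M j l)
    (hSpd : ∀ j, (Smat j).PosDef)
    (gauss : ι → (Fin d → ℝ) → ℝ)
    (hgauss : ∀ j x, gauss j x =
      Real.exp (-(1 / 2) * ∑ k, ∑ l, x k * (Smat j)⁻¹ k l * x l) /
        Real.sqrt ((2 * Real.pi) ^ d * (Smat j).det))
    (δ : ℝ) (hδ0 : 0 < δ) (hδ : δ < 1 / 2)
    (trunc : ℕ → (Fin d → ℝ) → Fin d → ℝ)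
    (htrunc : ∀ N x, trunc N x = if Real.sqrt (∑ l, x l ^ 2) ≤ (N : ℝ) ^ δ then x else 0)
    (ext : (Fin d → ℝ) → Fin (d + 1) → ℝ)
    (hext : ∀ x, ext x = Fin.snoc x (-∑ k, x k))
    (ν : ∀ N : ℕ, (Fin N → Fin (d + 1)) → ℝ)
    (hν : ∀ N σ, ν N σ = (∑ j, w j)⁻¹ * ∑ j, w j *
      ∫ x : Fin d → ℝ,
        (∏ i, ∑ k, (Mfull j k + ext (trunc N x) k / Real.sqrt N) *
          (if σ i = k then (1 : ℝ) else 0)) * gauss j x) :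
    Tendsto (fun N => relEnt (μ N) (ν N)) atTop (nhds 0) ∧
      Tendsto (fun N => relEnt (ν N) (μ N)) atTop (nhds 0) := by
  obtain rfl : G = freeEnergy F := by
    ext x
    simp only [hG, hent, freeEnergy, full, shannonEntropy, negMulLog, neg_mul,
      Finset.sum_neg_distrib]
  obtain rfl : Δhat = redSimplex d := hΔhat
  let j₀ := Classical.arbitrary ι
  have hmem j : M j ∈ redSimplex d := interior_subset (hMint j)
  have hgap : IsNondegenerateGap (fun x ↦ freeEnergy F (M j₀) - freeEnergy F x) M H :=
    isNondegenerateGap_sub_freeEnergy hF hF₂ hMint (hMmax j₀)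
      (fun x hx ↦ ⟨fun h ↦ (hMonly x hx (h ▸ hMmax j₀)).imp fun _ ↦ Eq.symm,
        by rintro ⟨j, rfl⟩; exact (hMmax j₀ _ hx).antisymm (hMmax j _ (hmem j₀))⟩) hH hHpd
  have hSH j : categoricalCov (M j) + Smat j = (H j)⁻¹ := by
    rw [hS, categoricalCov, Matrix.vecMulVec]
    abel
  refine tendsto_relEnt_gibbs_gaussianMixture (w := w) hgap hMinj hδ0 hδ
    (fun j ↦ by rw [hw, hMfull, full]) hSpd hSH (fun N ↦ ?_) fun N σ ↦ ?_
  · ext σ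
    rw [hμ, hZ]
    rfl
  · simp only [hν, gaussianMixture, productMixture_truncatedParameter_eq_integral,
      gaussianDensity_eq_sum, hgauss, hMfull, hext, htrunc, full, tangent, truncate]

/-- Under assumptions (A) and (B), the mixture of product measures `ν_N`
approximates the Gibbs measure `μ_N` in relative entropy in both directions:
`H(μ_N|ν_N) → 0` and `H(ν_N|μ_N) → 0` as `N → ∞`. Here `q = d + 1`, `d ≥ 1`. -/
theorem stmt_1
    (d p : ℕ) (hd : 1 ≤ d) (hp : 1 ≤ p)
    (F : (Fin (d + 1) → ℝ) → ℝ)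
    (hF : ContDiffOn ℝ 2 F {m : Fin (d + 1) → ℝ | (∀ k, 0 ≤ m k) ∧ ∑ k, m k = 1})
    (ent : (Fin (d + 1) → ℝ) → ℝ)
    (hent : ∀ m, ent m = -∑ k, m k * Real.log (m k))
    (G : (Fin d → ℝ) → ℝ)
    (hG : ∀ x : Fin d → ℝ,
      G x = F (Fin.snoc x (1 - ∑ k, x k)) + ent (Fin.snoc x (1 - ∑ k, x k)))
    (Δhat : Set (Fin d → ℝ))
    (hΔhat : Δhat = {x : Fin d → ℝ | (∀ k, 0 ≤ x k) ∧ ∑ k, x k ≤ 1})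
    (M : Fin p → Fin d → ℝ)
    (hMinj : Function.Injective M)
    (hMint : ∀ j, M j ∈ interior Δhat)
    (hMmax : ∀ j, ∀ x ∈ Δhat, G x ≤ G (M j))
    (hMonly : ∀ x ∈ Δhat, (∀ y ∈ Δhat, G y ≤ G x) → ∃ j, x = M j)
    (H : Fin p → Matrix (Fin d) (Fin d) ℝ)
    (hH : ∀ j k l, H j k l =
      -(fderiv ℝ (fun x => fderiv ℝ G x (Pi.single l 1)) (M j)) (Pi.single k 1))
    (hHpd : ∀ j, (H j).PosDef)
    (Mfull : Fin p → Fin (d + 1) → ℝ)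
    (hMfull : ∀ j, Mfull j = Fin.snoc (M j) (1 - ∑ k, M j k))
    (w : Fin p → ℝ)
    (hw : ∀ j, w j = (Real.sqrt ((H j).det * ∏ k, Mfull j k))⁻¹)
    -- the Gibbs measure
    (Z : ℕ → ℝ)
    (hZ : ∀ N : ℕ, Z N = ∑ σ : Fin N → Fin (d + 1),
      Real.exp ((N : ℝ) * F (fun k => ((Finset.univ.filter fun i => σ i = k).card : ℝ) / N)))
    (μ : ∀ N : ℕ, (Fin N → Fin (d + 1)) → ℝ)
    (hμ : ∀ N σ, μ N σ =
      Real.exp ((N : ℝ) * F (fun k => ((Finset.univ.filter fun i => σ i = k).card : ℝ) / N)) / Z N)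
    -- the mixing Gaussian distributions
    (Smat : Fin p → Matrix (Fin d) (Fin d) ℝ)
    (hS : ∀ j, Smat j = (H j)⁻¹ - Matrix.diagonal (M j) + Matrix.of fun k l => M j k * M j l)
    (hSpd : ∀ j, (Smat j).PosDef)
    (gauss : Fin p → (Fin d → ℝ) → ℝ)
    (hgauss : ∀ j x, gauss j x =
      Real.exp (-(1 / 2) * ∑ k, ∑ l, x k * (Smat j)⁻¹ k l * x l) /
        Real.sqrt ((2 * Real.pi) ^ d * (Smat j).det))
    (δ : ℝ) (hδ0 : 0 < δ) (hδ : δ < 1 / 6)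
    -- truncation at Euclidean norm `N ^ δ` and extension by `ξ_q = -∑_{k<q} ξ_k`
    (trunc : ℕ → (Fin d → ℝ) → Fin d → ℝ)
    (htrunc : ∀ N x, trunc N x = if Real.sqrt (∑ l, x l ^ 2) ≤ (N : ℝ) ^ δ then x else 0)
    (ext : (Fin d → ℝ) → Fin (d + 1) → ℝ)
    (hext : ∀ x, ext x = Fin.snoc x (-∑ k, x k))
    -- the mixture of product measures
    (ν : ∀ N : ℕ, (Fin N → Fin (d + 1)) → ℝ)
    (hν : ∀ N σ, ν N σ = (∑ j, w j)⁻¹ * ∑ j, w j *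
      ∫ x : Fin d → ℝ,
        (∏ i, ∑ k, (Mfull j k + ext (trunc N x) k / Real.sqrt N) *
          (if σ i = k then (1 : ℝ) else 0)) * gauss j x) :
    Tendsto (fun N => relEnt (μ N) (ν N)) atTop (nhds 0) ∧
      Tendsto (fun N => relEnt (ν N) (μ N)) atTop (nhds 0) := by
  have : Nonempty (Fin p) := ⟨⟨0, hp⟩⟩
  exact stmt_1_general d F hF.continuousOn ent hent G hG Δhat hΔhat M hMinj hMint
    (fun j ↦ contDiffAt_comp_full hF (interior_mono hΔhat.subset (hMint j))) hMmax hMonly H hH hHpd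
    Mfull hMfull w hw Z hZ μ hμ Smat hS hSpd gauss hgauss δ hδ0 (hδ.trans (by norm_num)) trunc
    htrunc ext hext ν hν
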